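/- arXiv:math/9204212 — 2 statements merged into one kernel-verified Lean document; each statement's English description precedes it below -/
import Mathlib

section
/- Let K be a symmetric convex body in ℝⁿ. If for some τ > 0 the volume vol(K ∩ (x + τK)) depends only on ‖x‖_K (i.e., ‖x‖_K = ‖y‖_K implies vol(K ∩ (x+τK)) = vol(K ∩ (y+τK))), then K is an ellipsoid. Conversely, every symmetric ellipsoid has this property for every τ > 0. -/
open MeasureTheory Set
open scoped Pointwise
open Filter Function Module ProbabilityTheory
open scoped ENNReal Topology

/-!
For even `k`, integrating `(ℓ x) ^ k` against `x ↦ μ (K ∩ (x + τK))` gives the `k`-th moment of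
`ℓ y - τ ℓ w` for `y, w ∈ K`. If that function depends only on `‖x‖_K`, integration along the level
sets of `‖·‖_K` makes the same integral a multiple, independent of `ℓ`, of `∫_K ℓ ^ k`. Expanding
binomially, this determines all `∫_K ℓ ^ k` recursively from `∫_K ℓ ^ 2`. Even moments determine
`max_K |ℓ|`, so the support function of `K` is a function of the positive definite quadratic form
`ℓ ↦ ∫_K ℓ ^ 2`, and `K` is an ellipsoid. Conversely, any two points of the same gauge in an
ellipsoid are exchanged by a linear conjugate of a reflection, which preserves the ellipsoid and the
measure.
-/

/-- The cross covariogram `x ↦ μ (A ∩ (x + B))` of `A` and `B`. -/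
noncomputable def crossCovariogram {G : Type*} [AddCommGroup G] [MeasurableSpace G]
    (μ : Measure G) (A B : Set G) (x : G) : ℝ≥0∞ :=
  μ (A ∩ (x +ᵥ B))

/-- The support function of `K` on the dual space. It has its usual meaning when `K` is nonempty and
bounded; otherwise the real supremum may be the junk value `0`. -/
noncomputable def supportFunction {E : Type*} [NormedAddCommGroup E] [NormedSpace ℝ E]
    (K : Set E) (ℓ : StrongDual ℝ E) : ℝ :=
  sSup (ℓ '' K)

/-- `K` is an ellipsoid centred at `0`: the image of the closed unit ball of the Euclidean space `F`
under a linear isomorphism. Only the dimension of `F` matters. -/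
def IsEllipsoid {E : Type*} [AddCommGroup E] [Module ℝ E] (F : Type*) [NormedAddCommGroup F]
    [InnerProductSpace ℝ F] (K : Set E) : Prop :=
  ∃ T : F ≃ₗ[ℝ] E, K = T '' Metric.closedBall 0 1

section Covariogram

variable {G : Type*} [AddCommGroup G] [MeasurableSpace G] [MeasurableAdd₂ G] [MeasurableNeg G]
  (μ : Measure G) {A B : Set G}

lemma crossCovariogram_eq_lintegral (hB : MeasurableSet B) (x : G) :
    crossCovariogram μ A B x = ∫⁻ y in A, B.indicator 1 (y - x) ∂μ := by
  have hxB : x +ᵥ B = (fun y ↦ y - x) ⁻¹' B := by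
    ext y
    rw [mem_vadd_set_iff_neg_vadd_mem, vadd_eq_add, neg_add_eq_sub, mem_preimage]
  have hm : MeasurableSet ((fun y ↦ y - x) ⁻¹' B) := measurable_id.sub_const x hB
  rw [crossCovariogram, hxB, inter_comm, ← Measure.restrict_apply hm,
    ← lintegral_indicator_one hm]
  rfl

variable [SFinite μ]

lemma measurable_crossCovariogram (hB : MeasurableSet B) : Measurable (crossCovariogram μ A B) := by
  rw [funext (crossCovariogram_eq_lintegral μ hB)]
  exact Measurable.lintegral_prod_right' (f := fun p : G × G ↦ B.indicator 1 (p.2 - p.1))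
    ((measurable_one.indicator hB).comp (measurable_snd.sub measurable_fst))

lemma lintegral_crossCovariogram_mul [μ.IsAddLeftInvariant] [μ.IsNegInvariant]
    (hB : MeasurableSet B) {P : G → ℝ≥0∞} (hP : Measurable P) :
    ∫⁻ x, crossCovariogram μ A B x * P x ∂μ = ∫⁻ y in A, ∫⁻ w in B, P (y - w) ∂μ ∂μ := by
  have hind : Measurable (B.indicator (1 : G → ℝ≥0∞)) := measurable_one.indicator hB
  calc ∫⁻ x, crossCovariogram μ A B x * P x ∂μ
      = ∫⁻ x, ∫⁻ y in A, B.indicator 1 (y - x) * P x ∂μ ∂μ := by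
        refine lintegral_congr fun x ↦ ?_
        rw [crossCovariogram_eq_lintegral μ hB, lintegral_mul_const]
        exact hind.comp (measurable_id.sub_const x)
    _ = ∫⁻ y in A, ∫⁻ x, B.indicator 1 (y - x) * P x ∂μ ∂μ :=
        lintegral_lintegral_swap ((hind.comp (measurable_snd.sub measurable_fst)).mul
          (hP.comp measurable_fst)).aemeasurable
    _ = ∫⁻ y in A, ∫⁻ w in B, P (y - w) ∂μ ∂μ := by
        refine lintegral_congr fun y ↦ ?_
        rw [← lintegral_sub_left_eq_self _ y, ← lintegral_indicator hB]
        refine lintegral_congr fun w ↦ ?_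
        by_cases hw : w ∈ B <;> simp [hw]

end Covariogram

section Moments

lemma moment_eq_zero_of_odd {G : Type*} [AddGroup G] [MeasurableSpace G] [MeasurableNeg G]
    (ν : Measure G) [ν.IsNegInvariant] {f : G → ℝ} (hf : ∀ x, f (-x) = -f x) {k : ℕ} (hk : Odd k) :
    moment f k ν = 0 := by
  have h := integral_neg_eq_self (f ^ k) ν
  simp only [Pi.pow_apply, hf, hk.neg_pow, integral_neg] at h
  simp only [moment, Pi.pow_apply]
  linarith

variable {α β : Type*} [MeasurableSpace α] [MeasurableSpace β] {ν : Measure α} {ν' : Measure β}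
  {f : α → ℝ}

lemma moment_nonneg_of_even {k : ℕ} (hk : Even k) : 0 ≤ moment f k ν :=
  integral_nonneg fun _ ↦ hk.pow_nonneg _

lemma moment_pos_of_even {k : ℕ} (hk : Even k) (hint : Integrable (f ^ k) ν)
    (hf : ¬ f =ᵐ[ν] 0) : 0 < moment f k ν := by
  refine (moment_nonneg_of_even hk).lt_of_ne' fun h ↦ hf ?_
  filter_upwards [(integral_eq_zero_iff_of_nonneg (fun x ↦ hk.pow_nonneg (f x)) hint).1 h]
    with x hx using eq_zero_of_pow_eq_zero hx

lemma moment_const_mul (c : ℝ) (k : ℕ) : moment (fun x ↦ c * f x) k ν = c ^ k * moment f k ν := by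
  simp only [moment, Pi.pow_apply, mul_pow, integral_const_mul]

lemma ofReal_moment {k : ℕ} (hk : Even k) (hint : Integrable (f ^ k) ν) :
    ENNReal.ofReal (moment f k ν) = ∫⁻ x, ENNReal.ofReal (f x ^ k) ∂ν :=
  ofReal_integral_eq_lintegral_ofReal hint (ae_of_all _ fun _ ↦ hk.pow_nonneg _)

lemma moment_add_prod [SFinite ν] [SFinite ν'] {g : β → ℝ} {k : ℕ}
    (hf : ∀ i ≤ k, Integrable (f ^ i) ν) (hg : ∀ i ≤ k, Integrable (g ^ i) ν') :
    moment (fun z : α × β ↦ f z.1 + g z.2) k (ν.prod ν') =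
      ∑ i ∈ Finset.range (k + 1), moment f i ν * moment g (k - i) ν' * k.choose i := by
  simp only [moment, Pi.pow_apply, add_pow]
  rw [integral_finsetSum]
  · refine Finset.sum_congr rfl fun i _ ↦ ?_
    rw [integral_mul_const, integral_prod_mul (fun x ↦ f x ^ i) (fun y ↦ g y ^ (k - i))]
  · intro i hi
    exact ((hf i (Finset.mem_range_succ_iff.1 hi)).mul_prod (hg _ (k.sub_le i))).mul_const _

lemma ae_abs_le_of_even_moment_le [IsFiniteMeasure ν] {C s : ℝ} (hs : 0 ≤ s)
    (hint : ∀ k, Integrable (f ^ (2 * k)) ν) (h : ∀ k, moment f (2 * k) ν ≤ C * s ^ (2 * k)) :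
    ∀ᵐ x ∂ν, |f x| ≤ s := by
  have hnull : ∀ r > s, ∀ᵐ x ∂ν, |f x| < r := by
    intro r hr
    have hr0 : 0 < r := hs.trans_lt hr
    have hmarkov (k : ℕ) : ν.real {x | r ≤ |f x|} ≤ C * ((s / r) ^ 2) ^ k := by
      have hsub : {x | r ≤ |f x|} ⊆ {x | r ^ (2 * k) ≤ (f ^ (2 * k)) x} := fun x hx ↦ by
        simpa only [mem_ofPred_eq, Pi.pow_apply, (even_two_mul k).pow_abs] using
          pow_le_pow_left₀ hr0.le hx (2 * k)
      have hpow := mul_meas_ge_le_integral_of_nonneg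
        (ae_of_all ν fun x ↦ (even_two_mul k).pow_nonneg (f x)) (hint k) (r ^ (2 * k))
      rw [← pow_mul, div_pow, mul_div_assoc', le_div_iff₀' (pow_pos hr0 _)]
      exact (mul_le_mul_of_nonneg_left (measureReal_mono hsub) (by positivity)).trans
        (hpow.trans (h k))
    have hlim : Tendsto (fun k : ℕ ↦ C * ((s / r) ^ 2) ^ k) atTop (𝓝 0) := by
      have hlt : (s / r) ^ 2 < 1 := pow_lt_one₀ (by positivity) ((div_lt_one hr0).2 hr) two_ne_zero
      simpa using (tendsto_pow_atTop_nhds_zero_of_lt_one (sq_nonneg _) hlt).const_mul C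
    have hzero : ν.real {x | r ≤ |f x|} = 0 :=
      (ge_of_tendsto' hlim hmarkov).antisymm measureReal_nonneg
    simpa only [ae_iff, not_lt] using (measureReal_eq_zero_iff).1 hzero
  filter_upwards [ae_all_iff.2 fun n : ℕ ↦ hnull (s + 1 / (n + 1))
    (lt_add_of_pos_right _ Nat.one_div_pos_of_nat)] with x hx
  refine le_of_forall_pos_le_add fun ε hε ↦ ?_
  obtain ⟨n, hn⟩ := exists_nat_one_div_lt hε
  linarith [hx n]

end Moments

lemma lintegral_map_withDensity {α β : Type*} [MeasurableSpace α] [MeasurableSpace β]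
    (μ : Measure α) {g : α → β} (hg : Measurable g) {P : α → ℝ≥0∞} (hP : Measurable P)
    {φ : β → ℝ≥0∞} (hφ : Measurable φ) :
    ∫⁻ s, φ s ∂(μ.withDensity P).map g = ∫⁻ x, φ (g x) * P x ∂μ := by
  have hφg : Measurable fun x ↦ φ (g x) := hφ.comp hg
  rw [lintegral_map hφ hg, lintegral_withDensity_eq_lintegral_mul _ hP hφg]
  exact lintegral_congr fun x ↦ mul_comm _ _

section Gauge

variable {E : Type*} [NormedAddCommGroup E] [NormedSpace ℝ E] {K : Set E}

lemma preimage_gauge_Iic (hcl : IsClosed K) (hconv : Convex ℝ K) (h0 : K ∈ 𝓝 0) {t : ℝ}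
    (ht : 0 < t) : gauge K ⁻¹' Iic t = t • K := by
  ext x
  rw [mem_smul_set_iff_inv_smul_mem₀ ht.ne', mem_preimage, mem_Iic]
  conv_rhs => rw [← hcl.closure_eq]
  rw [← gauge_le_one_iff_mem_closure hconv h0, gauge_smul_of_nonneg (inv_nonneg.2 ht.le),
    smul_eq_mul, inv_mul_le_iff₀ ht, mul_one]

lemma preimage_gauge_Iic_of_nonpos (hbdd : Bornology.IsBounded K) (h0 : K ∈ 𝓝 0) {t : ℝ}
    (ht : t ≤ 0) : gauge K ⁻¹' Iic t ⊆ {0} := by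
  intro x hx
  by_contra hne
  exact ((gauge_pos (absorbent_nhds_zero h0) ((NormedSpace.isVonNBounded_iff ℝ).2 hbdd)).2 hne)
    |>.not_ge (le_trans hx ht)

lemma exists_gauge_eq_one [Nontrivial E] (hbdd : Bornology.IsBounded K) (h0 : K ∈ 𝓝 0) :
    ∃ u, gauge K u = 1 := by
  obtain ⟨e, he⟩ := exists_ne (0 : E)
  have hpos : 0 < gauge K e :=
    (gauge_pos (absorbent_nhds_zero h0) ((NormedSpace.isVonNBounded_iff ℝ).2 hbdd)).2 he
  refine ⟨(gauge K e)⁻¹ • e, ?_⟩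
  rw [gauge_smul_of_nonneg (inv_nonneg.2 hpos.le), smul_eq_mul, inv_mul_cancel₀ hpos.ne']

lemma exists_measurable_eq_comp_gauge [Nontrivial E] [MeasurableSpace E] [BorelSpace E]
    {β : Type*} [MeasurableSpace β] {f : E → β} (hf : Measurable f) (hbdd : Bornology.IsBounded K)
    (h0 : K ∈ 𝓝 0) (h : f.FactorsThrough (gauge K)) :
    ∃ φ : ℝ → β, Measurable φ ∧ f = φ ∘ gauge K := by
  obtain ⟨u, hu⟩ := exists_gauge_eq_one hbdd h0
  have hmeas : Measurable fun t : ℝ ↦ t • u := (continuous_id.smul continuous_const).measurable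
  refine ⟨fun t ↦ f (t • u), hf.comp hmeas, funext fun x ↦ h ?_⟩
  rw [gauge_smul_of_nonneg (gauge_nonneg x), hu, smul_eq_mul, mul_one]

variable [FiniteDimensional ℝ E] [MeasurableSpace E] [BorelSpace E] (μ : Measure E)
  [μ.IsAddHaarMeasure]

lemma setLIntegral_smul_set {t : ℝ} (ht : t ≠ 0) (K : Set E) (P : E → ℝ≥0∞) :
    ∫⁻ x in t • K, P x ∂μ = ENNReal.ofReal |t| ^ finrank ℝ E * ∫⁻ x in K, P (t • x) ∂μ := by
  have hpos : 0 < |t| ^ finrank ℝ E := pow_pos (abs_pos.2 ht) _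
  have hemb : MeasurableEmbedding (fun x : E ↦ t • x) :=
    (Homeomorph.smulOfNeZero t ht).measurableEmbedding
  have hrestrict : (μ.restrict K).map (t • ·) =
      ENNReal.ofReal (|t| ^ finrank ℝ E)⁻¹ • μ.restrict (t • K) := by
    have h := hemb.restrict_map μ (t • K)
    rw [← image_smul, preimage_image_eq K hemb.injective, image_smul,
      Measure.map_addHaar_smul μ ht, Measure.restrict_smul, abs_inv, abs_pow] at h
    exact h.symm
  rw [← hemb.lintegral_map, hrestrict, lintegral_smul_measure, smul_eq_mul, ← mul_assoc,
    ← ENNReal.ofReal_pow (abs_nonneg t), ← ENNReal.ofReal_mul hpos.le, mul_inv_cancel₀ hpos.ne',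
    ENNReal.ofReal_one, one_mul]

variable {P Q : E → ℝ≥0∞} {k : ℕ}

lemma map_gauge_withDensity_Iic [Nontrivial E] (hcomp : IsCompact K) (hconv : Convex ℝ K)
    (h0 : K ∈ 𝓝 0) (hP : Measurable P)
    (hPk : ∀ t : ℝ, 0 < t → ∀ x, P (t • x) = ENNReal.ofReal t ^ k * P x) (t : ℝ) :
    (μ.withDensity P).map (gauge K) (Iic t) =
      ENNReal.ofReal t ^ (finrank ℝ E + k) * ∫⁻ x in K, P x ∂μ := by
  have hg : Measurable (gauge K) := (continuous_gauge hconv h0).measurable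
  rw [Measure.map_apply hg measurableSet_Iic, withDensity_apply _ (hg measurableSet_Iic)]
  rcases lt_or_ge 0 t with ht | ht
  · simp_rw [preimage_gauge_Iic hcomp.isClosed hconv h0 ht, setLIntegral_smul_set μ ht.ne',
      hPk t ht, lintegral_const_mul _ hP, abs_of_pos ht, pow_add, mul_assoc]
  · rw [ENNReal.ofReal_of_nonpos ht, zero_pow (Nat.add_pos_left finrank_pos k).ne', zero_mul]
    exact setLIntegral_measure_zero _ _ (measure_mono_null
      (preimage_gauge_Iic_of_nonpos hcomp.isBounded h0 ht) (measure_singleton _))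

lemma smul_map_gauge_withDensity [Nontrivial E] (hcomp : IsCompact K) (hconv : Convex ℝ K)
    (h0 : K ∈ 𝓝 0) (hP : Measurable P) (hQ : Measurable Q)
    (hPk : ∀ t : ℝ, 0 < t → ∀ x, P (t • x) = ENNReal.ofReal t ^ k * P x)
    (hQk : ∀ t : ℝ, 0 < t → ∀ x, Q (t • x) = ENNReal.ofReal t ^ k * Q x)
    (hPfin : ∫⁻ x in K, P x ∂μ ≠ ∞) (hQfin : ∫⁻ x in K, Q x ∂μ ≠ ∞) :
    (∫⁻ x in K, Q x ∂μ) • (μ.withDensity P).map (gauge K) =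
      (∫⁻ x in K, P x ∂μ) • (μ.withDensity Q).map (gauge K) := by
  refine Measure.ext_of_generateFrom_of_iUnion (range Iic) (fun i : ℕ ↦ Iic (i : ℝ))
    (by rw [← borel_eq_generateFrom_Iic]; exact BorelSpace.measurable_eq) isPiSystem_Iic
    (eq_univ_of_forall fun x ↦ mem_iUnion.2 (exists_nat_ge x)) (fun i ↦ mem_range_self _)
    (fun i ↦ ?_) ?_
  · rw [Measure.smul_apply, map_gauge_withDensity_Iic μ hcomp hconv h0 hP hPk, smul_eq_mul]
    exact ENNReal.mul_ne_top hQfin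
      (ENNReal.mul_ne_top (ENNReal.pow_ne_top ENNReal.ofReal_ne_top) hPfin)
  · rintro _ ⟨t, rfl⟩
    simp only [Measure.smul_apply, map_gauge_withDensity_Iic μ hcomp hconv h0 hP hPk,
      map_gauge_withDensity_Iic μ hcomp hconv h0 hQ hQk, smul_eq_mul]
    ring

lemma lintegral_gauge_mul_homogeneous [Nontrivial E] (hcomp : IsCompact K) (hconv : Convex ℝ K)
    (h0 : K ∈ 𝓝 0) (hP : Measurable P) (hQ : Measurable Q)
    (hPk : ∀ t : ℝ, 0 < t → ∀ x, P (t • x) = ENNReal.ofReal t ^ k * P x)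
    (hQk : ∀ t : ℝ, 0 < t → ∀ x, Q (t • x) = ENNReal.ofReal t ^ k * Q x)
    (hPfin : ∫⁻ x in K, P x ∂μ ≠ ∞) (hQfin : ∫⁻ x in K, Q x ∂μ ≠ ∞)
    {φ : ℝ → ℝ≥0∞} (hφ : Measurable φ) :
    (∫⁻ x in K, Q x ∂μ) * ∫⁻ x, φ (gauge K x) * P x ∂μ =
      (∫⁻ x in K, P x ∂μ) * ∫⁻ x, φ (gauge K x) * Q x ∂μ := by
  have hg : Measurable (gauge K) := (continuous_gauge hconv h0).measurable
  rw [← lintegral_map_withDensity μ hg hP hφ, ← lintegral_map_withDensity μ hg hQ hφ,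
    ← smul_eq_mul, ← smul_eq_mul, ← lintegral_smul_measure, ← lintegral_smul_measure,
    smul_map_gauge_withDensity μ hcomp hconv h0 hP hQ hPk hQk hPfin hQfin]

end Gauge

lemma eq_of_mul_binomial_sum_eq {R : Type*} [CommRing R] [IsDomain R] {a b : ℕ → R} {c : R} {k : ℕ}
    (hk : k ≠ 0) (hlt : ∀ j < k, a j = b j)
    (hne : ∑ i ∈ Finset.Ico 1 k, a i * (c ^ (k - i) * a (k - i)) * k.choose i ≠ 0)
    (h : b k * ∑ i ∈ Finset.range (k + 1), a i * (c ^ (k - i) * a (k - i)) * k.choose i =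
      a k * ∑ i ∈ Finset.range (k + 1), b i * (c ^ (k - i) * b (k - i)) * k.choose i) :
    a k = b k := by
  have hsplit (u : ℕ → R) :
      ∑ i ∈ Finset.range (k + 1), u i * (c ^ (k - i) * u (k - i)) * k.choose i =
        u 0 * (c ^ k + 1) * u k +
          ∑ i ∈ Finset.Ico 1 k, u i * (c ^ (k - i) * u (k - i)) * k.choose i := by
    rw [Finset.sum_range_succ, ← Finset.sum_range_add_sum_Ico _ (Nat.one_le_iff_ne_zero.2 hk)]
    simp only [Finset.sum_range_one, Nat.sub_zero, Nat.sub_self, Nat.choose_zero_right,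
      Nat.choose_self, Nat.cast_one, pow_zero]
    ring
  have hmiddle : ∑ i ∈ Finset.Ico 1 k, a i * (c ^ (k - i) * a (k - i)) * k.choose i =
      ∑ i ∈ Finset.Ico 1 k, b i * (c ^ (k - i) * b (k - i)) * k.choose i := by
    refine Finset.sum_congr rfl fun i hi ↦ ?_
    obtain ⟨hi1, hik⟩ := Finset.mem_Ico.1 hi
    rw [hlt i hik, hlt (k - i) (by omega)]
  rw [hsplit, hsplit, ← hmiddle, hlt 0 (Nat.pos_of_ne_zero hk)] at h
  -- The terms `i = 0` and `i = k` contribute the same multiple of `a k * b k` to both sides.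
  exact mul_right_cancel₀ hne (by linear_combination -h)

section MomentRecursion

lemma isNegInvariant_restrict {G : Type*} [AddGroup G] [MeasurableSpace G] [MeasurableNeg G]
    (μ : Measure G) [μ.IsNegInvariant] {K : Set G} (hsymm : K = -K) :
    (μ.restrict K).IsNegInvariant where
  neg_eq_self := by
    have h := (MeasurableEquiv.neg G).restrict_map μ K
    have hpre : MeasurableEquiv.neg G ⁻¹' K = K := hsymm.symm
    rw [hpre] at h
    exact h.symm.trans (congrArg (·.restrict K) (Measure.map_neg_eq_self μ))

lemma integrable_pow_restrict {X : Type*} [TopologicalSpace X] [MeasurableSpace X]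
    [OpensMeasurableSpace X] [T2Space X] (μ : Measure X) [IsFiniteMeasureOnCompacts μ] {K : Set X}
    (hcomp : IsCompact K) {f : X → ℝ} (hf : Continuous f) (k : ℕ) :
    Integrable (f ^ k) (μ.restrict K) :=
  (hf.pow k).continuousOn.integrableOn_compact hcomp

lemma moment_add_mul_prod_restrict {X : Type*} [TopologicalSpace X] [MeasurableSpace X]
    [OpensMeasurableSpace X] [T2Space X] (μ : Measure X) [IsFiniteMeasureOnCompacts μ] {K : Set X}
    (hcomp : IsCompact K) {f : X → ℝ} (hf : Continuous f) (c : ℝ) (k : ℕ) :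
    moment (fun z : X × X ↦ f z.1 + c * f z.2) k ((μ.restrict K).prod (μ.restrict K)) =
      ∑ i ∈ Finset.range (k + 1), moment f i (μ.restrict K) *
        (c ^ (k - i) * moment f (k - i) (μ.restrict K)) * k.choose i := by
  have := isFiniteMeasure_restrict.2 (hcomp.measure_ne_top (μ := μ))
  rw [moment_add_prod (g := fun x ↦ c * f x)
    (fun i _ ↦ integrable_pow_restrict μ hcomp hf i)
    (fun i _ ↦ integrable_pow_restrict μ hcomp (by fun_prop) i)]
  simp only [moment_const_mul]

variable {E : Type*} [NormedAddCommGroup E] [NormedSpace ℝ E] [MeasurableSpace E] [BorelSpace E]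
  (μ : Measure E) {K : Set E}

lemma moment_pos_of_ne_zero [IsFiniteMeasureOnCompacts μ] [μ.IsOpenPosMeasure]
    (hcomp : IsCompact K) (h0 : K ∈ 𝓝 0) {ℓ : StrongDual ℝ E} (hℓ : ℓ ≠ 0) {k : ℕ} (hk : Even k) :
    0 < moment ℓ k (μ.restrict K) := by
  refine moment_pos_of_even hk (integrable_pow_restrict μ hcomp ℓ.continuous k) fun hae ↦ hℓ ?_
  have hzero : EqOn ℓ 0 (interior K) := Measure.eqOn_open_of_ae_eq
    (ae_restrict_of_ae_restrict_of_subset interior_subset hae) isOpen_interior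
    ℓ.continuous.continuousOn continuousOn_const
  have hker : ℓ.ker = ⊤ := Submodule.eq_top_of_nonempty_interior' _
    ⟨0, interior_mono (fun x hx ↦ hzero hx) (by rwa [interior_interior, mem_interior_iff_mem_nhds])⟩
  ext x
  exact LinearMap.congr_fun (LinearMap.ker_eq_top.1 hker) x

variable [FiniteDimensional ℝ E] [μ.IsAddHaarMeasure] {τ : ℝ}

lemma lintegral_crossCovariogram_smul_mul (hK : MeasurableSet K) (hτ : τ ≠ 0) {P : E → ℝ≥0∞}
    (hP : Measurable P) :
    ∫⁻ x, crossCovariogram μ K (τ • K) x * P x ∂μ =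
      ENNReal.ofReal |τ| ^ finrank ℝ E *
        ∫⁻ z, P (z.1 - τ • z.2) ∂(μ.restrict K).prod (μ.restrict K) := by
  rw [lintegral_crossCovariogram_mul μ (hK.const_smul₀ τ) hP, lintegral_prod _ (by fun_prop),
    ← lintegral_const_mul' _ _ (ENNReal.pow_ne_top ENNReal.ofReal_ne_top)]
  exact lintegral_congr fun y ↦ setLIntegral_smul_set μ hτ K fun w ↦ P (y - w)

lemma lintegral_crossCovariogram_smul_mul_pow (hcomp : IsCompact K) (hτ : τ ≠ 0)
    (ℓ : StrongDual ℝ E) {k : ℕ} (hk : Even k) :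
    ∫⁻ x, crossCovariogram μ K (τ • K) x * ENNReal.ofReal (ℓ x ^ k) ∂μ =
      ENNReal.ofReal |τ| ^ finrank ℝ E * ENNReal.ofReal
        (moment (fun z : E × E ↦ ℓ z.1 + -τ * ℓ z.2) k
          ((μ.restrict K).prod (μ.restrict K))) := by
  have hint : Integrable ((fun z : E × E ↦ ℓ z.1 + -τ * ℓ z.2) ^ k)
      ((μ.restrict K).prod (μ.restrict K)) := by
    rw [Measure.prod_restrict]
    exact integrable_pow_restrict _ (hcomp.prod hcomp) (by fun_prop) k
  have hlin (z : E × E) : ℓ (z.1 - τ • z.2) = ℓ z.1 + -τ * ℓ z.2 := by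
    rw [map_sub, map_smul, smul_eq_mul, neg_mul, sub_eq_add_neg]
  rw [lintegral_crossCovariogram_smul_mul μ hcomp.measurableSet hτ (by fun_prop),
    ofReal_moment hk hint]
  simp only [hlin]

lemma moment_mul_moment_prod_comm [Nontrivial E] (hcomp : IsCompact K) (hconv : Convex ℝ K)
    (h0 : K ∈ 𝓝 0) (hτ : τ ≠ 0) (hcov : (crossCovariogram μ K (τ • K)).FactorsThrough (gauge K))
    (ℓ ℓ' : StrongDual ℝ E) {k : ℕ} (hk : Even k) :
    moment ℓ' k (μ.restrict K) *
        moment (fun z : E × E ↦ ℓ z.1 + -τ * ℓ z.2) k ((μ.restrict K).prod (μ.restrict K)) =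
      moment ℓ k (μ.restrict K) *
        moment (fun z : E × E ↦ ℓ' z.1 + -τ * ℓ' z.2) k ((μ.restrict K).prod (μ.restrict K)) := by
  obtain ⟨φ, hφ, hcovφ⟩ := exists_measurable_eq_comp_gauge
    (measurable_crossCovariogram μ (hcomp.measurableSet.const_smul₀ τ)) hcomp.isBounded h0 hcov
  have hmeas (m : StrongDual ℝ E) : Measurable fun x ↦ ENNReal.ofReal (m x ^ k) := by fun_prop
  have hhom (m : StrongDual ℝ E) (t : ℝ) (ht : 0 < t) (x : E) :
      ENNReal.ofReal (m (t • x) ^ k) = ENNReal.ofReal t ^ k * ENNReal.ofReal (m x ^ k) := by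
    rw [map_smul, smul_eq_mul, mul_pow, ENNReal.ofReal_mul (pow_nonneg ht.le k),
      ENNReal.ofReal_pow ht.le]
  have hmoment (m : StrongDual ℝ E) :
      ∫⁻ x in K, ENNReal.ofReal (m x ^ k) ∂μ = ENNReal.ofReal (moment m k (μ.restrict K)) :=
    (ofReal_moment hk (integrable_pow_restrict μ hcomp m.continuous k)).symm
  have hfin (m : StrongDual ℝ E) : ∫⁻ x in K, ENNReal.ofReal (m x ^ k) ∂μ ≠ ∞ :=
    hmoment m ▸ ENNReal.ofReal_ne_top
  have hpolar := lintegral_gauge_mul_homogeneous μ hcomp hconv h0 (hmeas ℓ) (hmeas ℓ') (hhom ℓ)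
    (hhom ℓ') (hfin ℓ) (hfin ℓ') hφ
  have hcomp_eq (x : E) : φ (gauge K x) = crossCovariogram μ K (τ • K) x := (congrFun hcovφ x).symm
  have hτn : ENNReal.ofReal |τ| ^ finrank ℝ E ≠ 0 := by simpa using fun h ↦ absurd h hτ
  simp only [hcomp_eq, lintegral_crossCovariogram_smul_mul_pow μ hcomp hτ _ hk, hmoment,
    mul_left_comm _ (ENNReal.ofReal |τ| ^ finrank ℝ E)] at hpolar
  rw [ENNReal.mul_right_inj hτn (ENNReal.pow_ne_top ENNReal.ofReal_ne_top),
    ← ENNReal.ofReal_mul (moment_nonneg_of_even hk),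
    ← ENNReal.ofReal_mul (moment_nonneg_of_even hk), ENNReal.ofReal_eq_ofReal_iff] at hpolar
  · exact hpolar
  all_goals exact mul_nonneg (moment_nonneg_of_even hk) (moment_nonneg_of_even hk)

lemma moment_binomial_middle_pos (hcomp : IsCompact K) (h0 : K ∈ 𝓝 0) (hsymm : K = -K)
    {c : ℝ} (hc : c ≠ 0) {ℓ : StrongDual ℝ E} (hℓ : ℓ ≠ 0) {k : ℕ} (hk : Even k) (hk4 : 4 ≤ k) :
    0 < ∑ i ∈ Finset.Ico 1 k, moment ℓ i (μ.restrict K) *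
      (c ^ (k - i) * moment ℓ (k - i) (μ.restrict K)) * k.choose i := by
  have := isNegInvariant_restrict μ hsymm
  have heven {i : ℕ} (hik : i < k) (hi : Even i) : 0 < moment ℓ i (μ.restrict K) *
      (c ^ (k - i) * moment ℓ (k - i) (μ.restrict K)) * k.choose i := by
    have hki : Even (k - i) := (Nat.even_sub hik.le).2 (by simp only [hk, hi])
    have hchoose := Nat.choose_pos hik.le
    have := moment_pos_of_ne_zero μ hcomp h0 hℓ hi
    have := moment_pos_of_ne_zero μ hcomp h0 hℓ hki
    have := hki.pow_pos hc
    positivity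
  refine Finset.sum_pos' (fun i hi ↦ ?_) ⟨2, Finset.mem_Ico.2 ⟨one_le_two, by omega⟩,
    heven (by omega) even_two⟩
  rcases Nat.even_or_odd i with hi' | hi'
  · exact (heven (Finset.mem_Ico.1 hi).2 hi').le
  · rw [moment_eq_zero_of_odd _ (map_neg ℓ) hi', zero_mul, zero_mul]

variable {ℓ ℓ' : StrongDual ℝ E}

lemma moment_eq_of_moment_two_eq_of_ne_zero (hcomp : IsCompact K) (hconv : Convex ℝ K)
    (h0 : K ∈ 𝓝 0) (hsymm : K = -K) (hτ : τ ≠ 0)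
    (hcov : (crossCovariogram μ K (τ • K)).FactorsThrough (gauge K)) (hℓ : ℓ ≠ 0)
    (h : moment ℓ 2 (μ.restrict K) = moment ℓ' 2 (μ.restrict K)) (k : ℕ) :
    moment ℓ k (μ.restrict K) = moment ℓ' k (μ.restrict K) := by
  have : Nontrivial E := by
    obtain ⟨x, hx⟩ := DFunLike.ne_iff.1 hℓ
    exact nontrivial_of_ne x 0 fun hx0 ↦ hx (by simp [hx0])
  have := isNegInvariant_restrict μ hsymm
  induction k using Nat.strong_induction_on with
  | _ k ih =>
    rcases Nat.even_or_odd k with hk | hk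
    · rcases le_or_gt 4 k with hk4 | hk4
      · refine eq_of_mul_binomial_sum_eq (by omega) ih
          (moment_binomial_middle_pos μ hcomp h0 hsymm (neg_ne_zero.2 hτ) hℓ hk hk4).ne' ?_
        simpa only [moment_add_mul_prod_restrict μ hcomp (ContinuousLinearMap.continuous _)] using
          moment_mul_moment_prod_comm μ hcomp hconv h0 hτ hcov ℓ ℓ' hk
      · obtain rfl | rfl : k = 0 ∨ k = 2 := by grind
        · simp only [moment, pow_zero, Pi.one_apply]
        · exact h
    · rw [moment_eq_zero_of_odd _ (map_neg ℓ) hk, moment_eq_zero_of_odd _ (map_neg ℓ') hk]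

lemma moment_eq_of_moment_two_eq (hcomp : IsCompact K) (hconv : Convex ℝ K)
    (h0 : K ∈ 𝓝 0) (hsymm : K = -K) (hτ : τ ≠ 0)
    (hcov : (crossCovariogram μ K (τ • K)).FactorsThrough (gauge K))
    (h : moment ℓ 2 (μ.restrict K) = moment ℓ' 2 (μ.restrict K)) (k : ℕ) :
    moment ℓ k (μ.restrict K) = moment ℓ' k (μ.restrict K) := by
  rcases ne_or_eq ℓ 0 with hℓ | rfl
  · exact moment_eq_of_moment_two_eq_of_ne_zero μ hcomp hconv h0 hsymm hτ hcov hℓ h k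
  · have hℓ' : ℓ' = 0 := by
      by_contra hne
      refine (moment_pos_of_ne_zero μ hcomp h0 hne even_two).ne' (h.symm.trans ?_)
      simp [moment]
    rw [hℓ']

end MomentRecursion

section SupportFunction

lemma abs_le_of_even_moment_eq {X : Type*} [TopologicalSpace X] [MeasurableSpace X]
    [OpensMeasurableSpace X] [T2Space X] (μ : Measure X) [IsFiniteMeasureOnCompacts μ]
    [μ.IsOpenPosMeasure] {K : Set X} (hcomp : IsCompact K) (hcl : K ⊆ closure (interior K))
    {f g : X → ℝ} (hg : Continuous g)
    (h : ∀ k, moment f (2 * k) (μ.restrict K) = moment g (2 * k) (μ.restrict K)) {s : ℝ}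
    (hs : ∀ x ∈ K, |f x| ≤ s) {x : X} (hx : x ∈ K) : |g x| ≤ s := by
  have hs0 : 0 ≤ s := (abs_nonneg _).trans (hs x hx)
  have := isFiniteMeasure_restrict.2 (hcomp.measure_ne_top (μ := μ))
  have hbound (k : ℕ) : moment g (2 * k) (μ.restrict K) ≤ μ.real K * s ^ (2 * k) := by
    rw [← h, mul_comm (μ.real K)]
    refine (Real.le_norm_self (∫ x in K, (f ^ (2 * k)) x ∂μ)).trans
      (norm_setIntegral_le_of_norm_le_const (hcomp.measure_lt_top (μ := μ)) fun y hy ↦ ?_)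
    rw [Pi.pow_apply, norm_pow, Real.norm_eq_abs]
    exact pow_le_pow_left₀ (abs_nonneg _) (hs y hy) _
  have hae := ae_abs_le_of_even_moment_le hs0
    (fun k ↦ integrable_pow_restrict μ hcomp hg (2 * k)) hbound
  have hmax : EqOn (fun x ↦ max |g x| s) (fun _ ↦ s) K :=
    Measure.eqOn_of_ae_eq (hae.mono fun y hy ↦ max_eq_right hy)
      (hg.abs.max continuous_const).continuousOn continuousOn_const hcl
  exact max_eq_right_iff.1 (hmax hx)

variable {E : Type*} [NormedAddCommGroup E] [NormedSpace ℝ E] {K : Set E}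

lemma le_supportFunction (hcomp : IsCompact K) (ℓ : StrongDual ℝ E) {x : E} (hx : x ∈ K) :
    ℓ x ≤ supportFunction K ℓ :=
  le_csSup (hcomp.image ℓ.continuous).bddAbove (mem_image_of_mem ℓ hx)

lemma supportFunction_le (hne : K.Nonempty) {ℓ : StrongDual ℝ E} {s : ℝ}
    (h : ∀ x ∈ K, ℓ x ≤ s) : supportFunction K ℓ ≤ s :=
  csSup_le (hne.image ℓ) (forall_mem_image.2 h)

lemma abs_le_supportFunction (hcomp : IsCompact K) (hsymm : K = -K) (ℓ : StrongDual ℝ E) {x : E}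
    (hx : x ∈ K) : |ℓ x| ≤ supportFunction K ℓ := by
  rw [hsymm] at hx
  exact abs_le'.2 ⟨le_supportFunction hcomp ℓ (hsymm ▸ hx),
    by simpa only [map_neg] using le_supportFunction hcomp ℓ (mem_neg.1 hx)⟩

lemma supportFunction_eq_of_even_moment_eq [MeasurableSpace E] [BorelSpace E] (μ : Measure E)
    [IsFiniteMeasureOnCompacts μ] [μ.IsOpenPosMeasure] (hcomp : IsCompact K)
    (hcl : K ⊆ closure (interior K)) (hsymm : K = -K) {ℓ ℓ' : StrongDual ℝ E}
    (h : ∀ k, moment ℓ (2 * k) (μ.restrict K) = moment ℓ' (2 * k) (μ.restrict K)) :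
    supportFunction K ℓ = supportFunction K ℓ' := by
  rcases K.eq_empty_or_nonempty with rfl | hne
  · simp only [supportFunction, image_empty]
  refine le_antisymm (supportFunction_le hne fun x hx ↦ ?_) (supportFunction_le hne fun x hx ↦ ?_)
  · exact (le_abs_self _).trans (abs_le_of_even_moment_eq μ hcomp hcl ℓ.continuous
      (fun k ↦ (h k).symm) (fun y hy ↦ abs_le_supportFunction hcomp hsymm ℓ' hy) hx)
  · exact (le_abs_self _).trans (abs_le_of_even_moment_eq μ hcomp hcl ℓ'.continuous
      h (fun y hy ↦ abs_le_supportFunction hcomp hsymm ℓ hy) hx)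

end SupportFunction

section InnerProduct

variable {E F : Type*} [NormedAddCommGroup F] [InnerProductSpace ℝ F]

lemma exists_norm_eq_inner_eq_mul (w z : F) : ∃ v : F, ‖v‖ = ‖w‖ ∧ inner ℝ v z = ‖w‖ * ‖z‖ := by
  rcases eq_or_ne z 0 with rfl | hz
  · exact ⟨w, rfl, by simp⟩
  · have hz' : ‖z‖ ≠ 0 := norm_ne_zero_iff.2 hz
    refine ⟨(‖w‖ / ‖z‖) • z, ?_, ?_⟩
    · rw [norm_smul, norm_div, norm_norm, norm_norm, div_mul_cancel₀ _ hz']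
    · rw [real_inner_smul_left, real_inner_self_eq_norm_sq]
      field_simp

lemma exists_eq_closedBall_of_supportFunction [CompleteSpace F] {L : Set F} (hcomp : IsCompact L)
    (hconv : Convex ℝ L) (hne : L.Nonempty)
    (h : (fun w ↦ supportFunction L (innerSL ℝ w)).FactorsThrough (norm : F → ℝ)) :
    ∃ c : ℝ, L = Metric.closedBall 0 c := by
  obtain ⟨z, hz, hmax⟩ := hcomp.exists_isMaxOn hne continuous_norm.continuousOn
  refine ⟨‖z‖, Subset.antisymm (fun y hy ↦ mem_closedBall_zero_iff.2 (hmax hy)) fun y hy ↦ ?_⟩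
  by_contra hyL
  obtain ⟨f, u, hfu, huy⟩ := geometric_hahn_banach_closed_point hconv hcomp.isClosed hyL
  obtain ⟨w, rfl⟩ := (InnerProductSpace.toDual ℝ F).surjective f
  obtain ⟨v, hvw, hvz⟩ := exists_norm_eq_inner_eq_mul w z
  refine huy.not_ge ?_
  calc inner ℝ w y ≤ ‖w‖ * ‖y‖ := real_inner_le_norm w y
    _ ≤ ‖w‖ * ‖z‖ := by gcongr; exact mem_closedBall_zero_iff.1 hy
    _ = innerSL ℝ v z := hvz.symm
    _ ≤ supportFunction L (innerSL ℝ v) := le_supportFunction hcomp _ hz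
    _ = supportFunction L (innerSL ℝ w) := h hvw
    _ ≤ u := supportFunction_le hne fun x hx ↦ (hfu x hx).le

lemma exists_pos_closedBall_eq {X : Type*} [PseudoMetricSpace X] {x : X} {c : ℝ}
    (h : Metric.closedBall x c ∈ 𝓝 x) : ∃ r > 0, Metric.closedBall x c = Metric.closedBall x r := by
  obtain ⟨ε, hε, hεc⟩ := Metric.nhds_basis_closedBall.mem_iff.1 h
  refine ⟨max c ε, lt_max_of_lt_right hε,
    (Metric.closedBall_subset_closedBall (le_max_left c ε)).antisymm ?_⟩
  rcases max_cases c ε with ⟨hmax, -⟩ | ⟨hmax, -⟩ <;> rw [hmax]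
  exact hεc

lemma exists_linearEquiv_norm_sq_eq [FiniteDimensional ℝ F] {V : Type*} [AddCommGroup V]
    [Module ℝ V] [FiniteDimensional ℝ V] (hVF : finrank ℝ V = finrank ℝ F)
    (B : LinearMap.BilinForm ℝ V) (hsymm : B.IsSymm) (hpos : ∀ v ≠ 0, 0 < B v v) :
    ∃ A : V ≃ₗ[ℝ] F, ∀ v, ‖A v‖ ^ 2 = B v v := by
  let core : InnerProductSpace.Core ℝ V :=
    { inner := fun v w ↦ B v w
      conj_inner_symm := fun v w ↦ hsymm.eq w v
      re_inner_nonneg := fun v ↦ by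
        rcases eq_or_ne v 0 with rfl | hv
        · simp
        · exact (hpos v hv).le
      add_left := fun u v w ↦ by simp
      smul_left := fun v w r ↦ by simp
      definite := fun v hv ↦ by_contra fun hne ↦ (hpos v hne).ne' hv }
  let _ : NormedAddCommGroup V := core.toNormedAddCommGroup
  let _ : InnerProductSpace ℝ V := .ofCore core.toCore
  let A : V ≃ₗᵢ[ℝ] F := (stdOrthonormalBasis ℝ V).equiv (stdOrthonormalBasis ℝ F) (finCongr hVF)
  refine ⟨A.toLinearEquiv, fun v ↦ ?_⟩
  rw [LinearIsometryEquiv.coe_toLinearEquiv, A.norm_map, ← real_inner_self_eq_norm_sq]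
  rfl

variable [NormedAddCommGroup E] [NormedSpace ℝ E] [FiniteDimensional ℝ E] [FiniteDimensional ℝ F]

lemma exists_linearEquiv_inner_eq (A : StrongDual ℝ E ≃ₗ[ℝ] F) :
    ∃ T : E ≃ₗ[ℝ] F, ∀ ℓ x, inner ℝ (A ℓ) (T x) = ℓ x := by
  let dualEquiv : Dual ℝ E ≃ₗ[ℝ] F := LinearMap.toContinuousLinearMap ≪≫ₗ A
  let riesz : Dual ℝ F ≃ₗ[ℝ] F :=
    LinearMap.toContinuousLinearMap ≪≫ₗ (InnerProductSpace.toDual ℝ F).symm.toLinearEquiv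
  refine ⟨evalEquiv ℝ E ≪≫ₗ dualEquiv.symm.dualMap ≪≫ₗ riesz, fun ℓ x ↦ ?_⟩
  have hriesz (f : Dual ℝ F) (w : F) : inner ℝ w (riesz f) = f w := by
    rw [real_inner_comm]
    exact InnerProductSpace.toDual_symm_apply
  simp only [LinearEquiv.trans_apply, hriesz]
  exact DFunLike.congr_fun (LinearEquiv.symm_apply_apply A ℓ) x

lemma isEllipsoid_of_supportFunction_factorsThrough {K : Set E} (hcomp : IsCompact K)
    (hconv : Convex ℝ K) (h0 : K ∈ 𝓝 0) (A : StrongDual ℝ E ≃ₗ[ℝ] F)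
    (h : (supportFunction K).FactorsThrough (fun ℓ ↦ ‖A ℓ‖)) : IsEllipsoid F K := by
  obtain ⟨T, hT⟩ := exists_linearEquiv_inner_eq A
  have hTcont : Continuous T := T.toLinearMap.continuous_of_finiteDimensional
  have hsupp (w : F) : supportFunction (T '' K) (innerSL ℝ w) = supportFunction K (A.symm w) := by
    rw [supportFunction, supportFunction, image_image]
    refine congrArg sSup (image_congr fun x _ ↦ ?_)
    rw [innerSL_apply_apply, ← hT, A.apply_symm_apply]
  obtain ⟨c, hc⟩ := exists_eq_closedBall_of_supportFunction (hcomp.image hTcont)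
    (hconv.linear_image T.toLinearMap) ((nonempty_of_mem (mem_of_mem_nhds h0)).image T) <| by
      intro w w' hw
      simp only [hsupp]
      exact h (by simpa only [A.apply_symm_apply] using hw)
  have hnhds : T '' K ∈ 𝓝 0 := by
    have h := T.toContinuousLinearEquiv.toHomeomorph.isOpenMap.image_mem_nhds h0
    exact (map_zero T) ▸ h
  obtain ⟨r, hr, hcr⟩ := exists_pos_closedBall_eq (hc ▸ hnhds)
  refine ⟨LinearEquiv.smulOfNeZero ℝ F r hr.ne' ≪≫ₗ T.symm, ?_⟩
  have hball : (r • · : F → F) '' Metric.closedBall 0 1 = T '' K := by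
    rw [hc, hcr, image_smul, smul_unitClosedBall, Real.norm_of_nonneg hr.le]
  calc K = T.symm '' (T '' K) := by simp only [image_image, T.symm_apply_apply, image_id']
    _ = _ := by rw [← hball, image_image]; rfl

end InnerProduct

section SecondMoment

variable {E F : Type*} [NormedAddCommGroup E] [NormedSpace ℝ E] [FiniteDimensional ℝ E]
  [MeasurableSpace E] [BorelSpace E] [NormedAddCommGroup F] [InnerProductSpace ℝ F]
  [FiniteDimensional ℝ F] (μ : Measure E) {K : Set E}

lemma exists_linearEquiv_norm_sq_eq_moment_two [IsFiniteMeasureOnCompacts μ] [μ.IsOpenPosMeasure]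
    (hFE : finrank ℝ F = finrank ℝ E) (hcomp : IsCompact K) (h0 : K ∈ 𝓝 0) :
    ∃ A : StrongDual ℝ E ≃ₗ[ℝ] F, ∀ ℓ, ‖A ℓ‖ ^ 2 = moment ℓ 2 (μ.restrict K) := by
  have := isFiniteMeasure_restrict.2 (hcomp.measure_ne_top (μ := μ))
  obtain ⟨R, hR⟩ := hcomp.isBounded.exists_norm_le
  have hLp : MemLp id 2 (μ.restrict K) :=
    (memLp_top_of_bound continuous_id.aestronglyMeasurable R <|
      ae_restrict_of_forall_mem hcomp.measurableSet hR).mono_exponent le_top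
  let B : LinearMap.BilinForm ℝ (StrongDual ℝ E) :=
    (uncenteredCovarianceBilinDual (μ.restrict K)).toBilinForm
  have hB (ℓ ℓ' : StrongDual ℝ E) : B ℓ ℓ' = ∫ x in K, ℓ x * ℓ' x ∂μ :=
    uncenteredCovarianceBilinDual_apply hLp ℓ ℓ'
  have hmoment (ℓ : StrongDual ℝ E) : B ℓ ℓ = moment ℓ 2 (μ.restrict K) := by
    simp only [hB, moment, Pi.pow_apply, sq]
  have hsymm : B.IsSymm := ⟨fun ℓ ℓ' ↦ by simp only [hB, mul_comm]⟩
  have hdual : finrank ℝ (StrongDual ℝ E) = finrank ℝ F :=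
    (LinearMap.toContinuousLinearMap.finrank_eq.symm.trans Subspace.dual_finrank_eq).trans hFE.symm
  obtain ⟨A, hA⟩ := exists_linearEquiv_norm_sq_eq hdual B hsymm fun ℓ hℓ ↦
    hmoment ℓ ▸ moment_pos_of_ne_zero μ hcomp h0 hℓ even_two
  exact ⟨A, fun ℓ ↦ (hA ℓ).trans (hmoment ℓ)⟩

end SecondMoment

lemma mem_nhds_zero_of_convex_of_eq_neg {E : Type*} [NormedAddCommGroup E] [NormedSpace ℝ E]
    {K : Set E} (hconv : Convex ℝ K) (hint : (interior K).Nonempty) (hsymm : K = -K) :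
    K ∈ 𝓝 0 := by
  obtain ⟨x, hx⟩ := hint
  have hnx : -x ∈ interior K := by
    rw [hsymm]
    exact ((Homeomorph.neg E).preimage_interior K).subset (by simpa using hx)
  rw [← mem_interior_iff_mem_nhds]
  have h := hconv.interior hx hnx one_half_pos.le one_half_pos.le (add_halves 1)
  rwa [smul_neg, add_neg_cancel] at h

section Ellipsoid

lemma gauge_linearEquiv_image {E F : Type*} [AddCommGroup E] [Module ℝ E] [AddCommGroup F]
    [Module ℝ F] (T : E ≃ₗ[ℝ] F) (s : Set E) (x : F) : gauge (T '' s) x = gauge s (T.symm x) := by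
  have h (r : ℝ) : x ∈ r • T '' s ↔ T.symm x ∈ r • s := by
    simp only [mem_smul_set, exists_mem_image, LinearEquiv.eq_symm_apply, map_smul]
  simp only [gauge, h]

lemma IsEllipsoid.exists_linearEquiv_image_eq_self {E F : Type*} [AddCommGroup E] [Module ℝ E]
    [NormedAddCommGroup F] [InnerProductSpace ℝ F] [FiniteDimensional ℝ F] {K : Set E}
    (hK : IsEllipsoid F K) {x y : E} (hxy : gauge K x = gauge K y) :
    ∃ S : E ≃ₗ[ℝ] E, |LinearMap.det (S : E →ₗ[ℝ] E)| = 1 ∧ S '' K = K ∧ S x = y := by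
  obtain ⟨T, rfl⟩ := hK
  simp only [gauge_linearEquiv_image, gauge_closedBall zero_le_one, div_one] at hxy
  let P : Submodule ℝ F := (ℝ ∙ (T.symm x - T.symm y))ᗮ
  have hP : P.reflection '' Metric.closedBall 0 1 = Metric.closedBall 0 1 := by
    rw [LinearIsometryEquiv.image_closedBall, map_zero]
  refine ⟨T.symm ≪≫ₗ P.reflection.toLinearEquiv ≪≫ₗ T, ?_, ?_, ?_⟩
  · have hdet := LinearMap.det_conj (P.reflection.toLinearMap) T
    rw [P.det_reflection] at hdet
    exact (congrArg abs hdet).trans (abs_neg_one_pow _)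
  · conv_rhs => rw [← hP]
    simp only [image_image, LinearEquiv.trans_apply, LinearEquiv.symm_apply_apply,
      LinearIsometryEquiv.coe_toLinearEquiv]
  · exact (congrArg T (Submodule.reflection_sub hxy)).trans (T.apply_symm_apply y)

lemma crossCovariogram_image_linearEquiv {E : Type*} [NormedAddCommGroup E] [NormedSpace ℝ E]
    [FiniteDimensional ℝ E] [MeasurableSpace E] [BorelSpace E] (μ : Measure E) [μ.IsAddHaarMeasure]
    (S : E ≃ₗ[ℝ] E) (A B : Set E) (x : E) :
    crossCovariogram μ (S '' A) (S '' B) (S x) =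
      ENNReal.ofReal |LinearMap.det (S : E →ₗ[ℝ] E)| * crossCovariogram μ A B x := by
  rw [crossCovariogram, ← image_vadd_distrib, ← image_inter S.injective, crossCovariogram]
  exact Measure.addHaar_image_linearMap μ S.toLinearMap _

end Ellipsoid

section Characterization

variable {E F : Type*} [NormedAddCommGroup E] [NormedSpace ℝ E] [FiniteDimensional ℝ E]
  [MeasurableSpace E] [BorelSpace E] [NormedAddCommGroup F] [InnerProductSpace ℝ F]
  [FiniteDimensional ℝ F] (μ : Measure E) [μ.IsAddHaarMeasure] {K : Set E}

lemma IsEllipsoid.crossCovariogram_factorsThrough (hK : IsEllipsoid F K) (τ : ℝ) :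
    (crossCovariogram μ K (τ • K)).FactorsThrough (gauge K) := by
  intro x y hxy
  obtain ⟨S, hdet, hSK, rfl⟩ := hK.exists_linearEquiv_image_eq_self hxy
  have hSτK : S '' (τ • K) = τ • K := by rw [image_smul_set, hSK]
  simpa only [hSK, hSτK, hdet, ENNReal.ofReal_one, one_mul] using
    (crossCovariogram_image_linearEquiv μ S K (τ • K) x).symm

lemma isEllipsoid_of_crossCovariogram_factorsThrough (hFE : finrank ℝ F = finrank ℝ E)
    (hcomp : IsCompact K) (hconv : Convex ℝ K) (h0 : K ∈ 𝓝 0) (hsymm : K = -K) {τ : ℝ}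
    (hτ : τ ≠ 0) (hcov : (crossCovariogram μ K (τ • K)).FactorsThrough (gauge K)) :
    IsEllipsoid F K := by
  obtain ⟨A, hA⟩ := exists_linearEquiv_norm_sq_eq_moment_two μ hFE hcomp h0
  have hcl : K ⊆ closure (interior K) := by
    rw [hconv.closure_interior_eq_closure_of_nonempty_interior
      (nonempty_of_mem (mem_interior_iff_mem_nhds.2 h0))]
    exact subset_closure
  refine isEllipsoid_of_supportFunction_factorsThrough hcomp hconv h0 A fun ℓ ℓ' hℓ ↦ ?_
  have hsq : moment ℓ 2 (μ.restrict K) = moment ℓ' 2 (μ.restrict K) := by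
    rw [← hA, ← hA, show ‖A ℓ‖ = ‖A ℓ'‖ from hℓ]
  exact supportFunction_eq_of_even_moment_eq μ hcomp hcl hsymm fun k ↦
    moment_eq_of_moment_two_eq μ hcomp hconv h0 hsymm hτ hcov hsq (2 * k)

theorem stmt_14_general (hFE : finrank ℝ F = finrank ℝ E) (hcomp : IsCompact K)
    (hconv : Convex ℝ K) (hint : (interior K).Nonempty) (hsymm : K = -K) :
    ((∃ τ : ℝ, τ ≠ 0 ∧ (crossCovariogram μ K (τ • K)).FactorsThrough (gauge K)) →
      IsEllipsoid F K) ∧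
    (IsEllipsoid F K → ∀ τ : ℝ, (crossCovariogram μ K (τ • K)).FactorsThrough (gauge K)) := by
  refine ⟨?_, fun hK ↦ hK.crossCovariogram_factorsThrough μ⟩
  rintro ⟨τ, hτ, hcov⟩
  exact isEllipsoid_of_crossCovariogram_factorsThrough μ hFE hcomp hconv
    (mem_nhds_zero_of_convex_of_eq_neg hconv hint hsymm) hsymm hτ hcov

end Characterization

lemma crossCovariogram_smul_eq {E : Type*} [AddCommGroup E] [Module ℝ E] [MeasurableSpace E]
    (μ : Measure E) (A B : Set E) (τ : ℝ) (x : E) :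
    crossCovariogram μ A (τ • B) x = μ (A ∩ (fun z ↦ x + τ • z) '' B) := by
  rw [crossCovariogram, ← image_vadd, ← image_smul, image_image]
  rfl

/-- Main theorem: a symmetric convex body `K` such that, for some `τ > 0`,
`vol (K ∩ (x + τK))` depends only on `‖x‖_K`, is an ellipsoid; conversely every symmetric
ellipsoid has this property for every `τ > 0`. -/
theorem stmt_14 (n : ℕ) (K : Set (EuclideanSpace ℝ (Fin n)))
    (hKcomp : IsCompact K) (hKconv : Convex ℝ K) (hKint : (interior K).Nonempty)
    (hKsymm : K = -K) :
    ((∃ τ : ℝ, 0 < τ ∧ ∀ x y : EuclideanSpace ℝ (Fin n), gauge K x = gauge K y →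
        volume (K ∩ (fun z => x + τ • z) '' K) = volume (K ∩ (fun z => y + τ • z) '' K)) →
      ∃ T : EuclideanSpace ℝ (Fin n) ≃ₗ[ℝ] EuclideanSpace ℝ (Fin n),
        K = T '' Metric.closedBall 0 1) ∧
    ((∃ T : EuclideanSpace ℝ (Fin n) ≃ₗ[ℝ] EuclideanSpace ℝ (Fin n),
        K = T '' Metric.closedBall 0 1) →
      ∀ τ : ℝ, 0 < τ → ∀ x y : EuclideanSpace ℝ (Fin n), gauge K x = gauge K y →
        volume (K ∩ (fun z => x + τ • z) '' K) = volume (K ∩ (fun z => y + τ • z) '' K)) := by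
  have h := stmt_14_general (F := EuclideanSpace ℝ (Fin n)) volume rfl hKcomp hKconv hKint hKsymm
  simp only [FactorsThrough, crossCovariogram_smul_eq] at h
  exact ⟨fun ⟨τ, hτ, hvol⟩ ↦ h.1 ⟨τ, hτ.ne', hvol⟩, fun hK τ _ ↦ h.2 hK τ⟩
end

section
/- Let K and C be convex bodies in ℝⁿ and suppose vol(K ∩ (x + C)) = vol(K ∩ C) for all x in a segment [0, v]. If additionally each intersection K ∩ (x + C) is nonempty with positive volume for x ∈ [0,v], then K ∩ (x + C) = (K ∩ C) + x' for some translation x' depending affinely on x; in particular all the intersections K ∩ (tv + C), t ∈ [0,1], are translates of one another. -/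
open MeasureTheory Set
open scoped Pointwise

/-!
The sets `A t = K ∩ (t • v + C)` form a concave family, so `(1 - t) • A 0 + t • A 1 ⊆ A t`, and
constancy of the volume is equality in the Brunn–Minkowski inequality for `A 0` and `A 1`.

Fix a nonzero linear functional `u`, whose level sets slice the bodies, and induct on the dimension
to compare slices. Transporting the slice-volume profiles of the two bodies onto one another by
their quantile functions reduces Brunn–Minkowski to the weighted AM-GM inequality at each quantile.
When equality holds, the quantile functions have the same derivative, so the two profiles are
translates of each other. The shift is the difference of the barycenters evaluated at `u`, hence
linear in `u`; by Hahn–Banach the bodies themselves are translates, `A 1 = w + A 0`. Convexity then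
puts `t • w + A 0` inside `A t`, which has the same volume.
-/

section Integration

theorem setIntegral_deriv_mul_comp_le_integral {z z' h : ℝ → ℝ} {s : Set ℝ}
    (hs : MeasurableSet s) (hz : MonotoneOn z s)
    (hz' : ∀ τ ∈ s, HasDerivWithinAt z (z' τ) s τ) (hh : 0 ≤ h) (hint : Integrable h) :
    ∫ τ in s, z' τ * h (z τ) ≤ ∫ x, h x :=
  (integral_image_eq_integral_deriv_smul_of_monotoneOn hs hz' hz h).symm.trans_le
    (setIntegral_le_integral hint (.of_forall hh))

theorem integrableOn_deriv_mul_comp {z z' h : ℝ → ℝ} {s : Set ℝ}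
    (hs : MeasurableSet s) (hz : MonotoneOn z s)
    (hz' : ∀ τ ∈ s, HasDerivWithinAt z (z' τ) s τ) (hint : Integrable h) :
    IntegrableOn (fun τ => z' τ * h (z τ)) s :=
  (integrableOn_image_iff_integrableOn_deriv_smul_of_monotoneOn hs hz' hz h).1 hint.integrableOn

theorem eqOn_of_le_of_setIntegral_le {X : Type*} [TopologicalSpace X] [MeasurableSpace X]
    [OpensMeasurableSpace X] {μ : Measure X} [μ.IsOpenPosMeasure] {U : Set X} (hU : IsOpen U)
    {f g : X → ℝ} (hf : ContinuousOn f U) (hg : ContinuousOn g U)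
    (hfint : IntegrableOn f U μ) (hgint : IntegrableOn g U μ) (hle : ∀ x ∈ U, f x ≤ g x)
    (hint : ∫ x in U, g x ∂μ ≤ ∫ x in U, f x ∂μ) : EqOn f g U := by
  have hae : f ≤ᵐ[μ.restrict U] g := by
    filter_upwards [ae_restrict_mem hU.measurableSet] with x hx using hle x hx
  have heq : f =ᵐ[μ.restrict U] g := (integral_eq_iff_of_ae_le hfint hgint hae).1
    (le_antisymm (integral_mono_ae hfint hgint hae) hint)
  exact Measure.eqOn_open_of_ae_eq heq hU hf hg

end Integration

section TransportWeight

/-- The integrand that appears when densities of total mass `α` and `β` are transported to their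
weighted average: the Jacobian `(1 - θ) α / x + θ β / y` of the transport map times the weighted
geometric mean of the density values `x` and `y`. -/
noncomputable def transportWeight (θ α β x y : ℝ) : ℝ :=
  ((1 - θ) * (α / x) + θ * (β / y)) * (x ^ (1 - θ) * y ^ θ)

variable {θ α β x y : ℝ}

theorem rpow_mul_rpow_le_transportWeight (hθ : θ ∈ Icc (0 : ℝ) 1) (hα : 0 ≤ α) (hβ : 0 ≤ β)
    (hx : 0 < x) (hy : 0 < y) : α ^ (1 - θ) * β ^ θ ≤ transportWeight θ α β x y := by
  have amgm := Real.geom_mean_le_arith_mean2_weighted (sub_nonneg.2 hθ.2) hθ.1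
    (div_nonneg hα hx.le) (div_nonneg hβ hy.le) (sub_add_cancel 1 θ)
  rw [Real.div_rpow hα hx.le, Real.div_rpow hβ hy.le, div_mul_div_comm] at amgm
  exact (div_le_iff₀ (by positivity)).1 amgm

theorem div_eq_div_of_transportWeight_eq (hθ : θ ∈ Ioo (0 : ℝ) 1) (hα : 0 ≤ α) (hβ : 0 ≤ β)
    (hx : 0 < x) (hy : 0 < y) (h : α ^ (1 - θ) * β ^ θ = transportWeight θ α β x y) :
    α / x = β / y := by
  refine (Real.geom_mean_eq_arith_mean2_weighted_iff_of_pos (sub_pos.2 hθ.2) hθ.1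
    (div_nonneg hα hx.le) (div_nonneg hβ hy.le) (sub_add_cancel 1 θ)).1 ?_
  rw [Real.div_rpow hα hx.le, Real.div_rpow hβ hy.le, div_mul_div_comm, h]
  exact mul_div_cancel_right₀ _ (by positivity)

end TransportWeight

/-- Unnormalized probability densities on a bounded interval, positive and continuous in its
interior. Nothing is required at the endpoints, so that the slice volumes of a convex body qualify
even when they jump there. -/
structure IsPosDensityOn (f : ℝ → ℝ) (a b : ℝ) : Prop where
  lt : a < b
  continuousOn : ContinuousOn f (Ioo a b)
  pos : ∀ s ∈ Ioo a b, 0 < f s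
  eq_zero : ∀ s ∉ Icc a b, f s = 0
  integrable : Integrable f

/-- The distribution function of the density `f` on an interval with left endpoint `a`, normalized
to have total mass one. -/
noncomputable def normalizedCDF (f : ℝ → ℝ) (a s : ℝ) : ℝ :=
  (∫ x, f x)⁻¹ * ∫ x in a..s, f x

/-- The quantile function of the density `f` on `(a, b)`; only its values on `(0, 1)` matter. -/
noncomputable def quantile (f : ℝ → ℝ) (a b : ℝ) : ℝ → ℝ :=
  Function.invFunOn (normalizedCDF f a) (Ioo a b)

namespace IsPosDensityOn

variable {f g h : ℝ → ℝ} {a b c d θ : ℝ}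

theorem intervalIntegral_eq_integral (hf : IsPosDensityOn f a b) :
    ∫ s in a..b, f s = ∫ s, f s := by
  rw [intervalIntegral.integral_of_le hf.lt.le, ← integral_Icc_eq_integral_Ioc]
  exact setIntegral_eq_integral_of_forall_compl_eq_zero hf.eq_zero

theorem integral_pos (hf : IsPosDensityOn f a b) : 0 < ∫ s, f s :=
  hf.intervalIntegral_eq_integral ▸ intervalIntegral.intervalIntegral_pos_of_pos_on
    hf.integrable.intervalIntegrable hf.pos hf.lt

theorem hasDerivAt_normalizedCDF (hf : IsPosDensityOn f a b) {s : ℝ} (hs : s ∈ Ioo a b) :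
    HasDerivAt (normalizedCDF f a) ((∫ x, f x)⁻¹ * f s) s :=
  (intervalIntegral.integral_hasDerivAt_right hf.integrable.intervalIntegrable
    (hf.continuousOn.stronglyMeasurableAtFilter isOpen_Ioo s hs)
    (hf.continuousOn.continuousAt (isOpen_Ioo.mem_nhds hs))).const_mul _

theorem continuousOn_normalizedCDF (hf : IsPosDensityOn f a b) :
    ContinuousOn (normalizedCDF f a) (Icc a b) := by
  rw [← uIcc_of_le hf.lt.le]
  exact continuousOn_const.mul
    (intervalIntegral.continuousOn_primitive_interval hf.integrable.integrableOn)

theorem strictMonoOn_normalizedCDF (hf : IsPosDensityOn f a b) :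
    StrictMonoOn (normalizedCDF f a) (Icc a b) := by
  refine strictMonoOn_of_deriv_pos (convex_Icc a b) hf.continuousOn_normalizedCDF fun s hs => ?_
  rw [interior_Icc] at hs
  rw [(hf.hasDerivAt_normalizedCDF hs).deriv]
  exact mul_pos (inv_pos.2 hf.integral_pos) (hf.pos s hs)

theorem bijOn_normalizedCDF (hf : IsPosDensityOn f a b) :
    BijOn (normalizedCDF f a) (Ioo a b) (Ioo 0 1) := by
  have left : normalizedCDF f a a = 0 := by simp [normalizedCDF]
  have right : normalizedCDF f a b = 1 := by
    rw [normalizedCDF, hf.intervalIntegral_eq_integral, inv_mul_cancel₀ hf.integral_pos.ne']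
  rw [← left, ← right]
  exact ⟨hf.strictMonoOn_normalizedCDF.mapsTo_Ioo,
    hf.strictMonoOn_normalizedCDF.injOn.mono Ioo_subset_Icc_self,
    intermediate_value_Ioo hf.lt.le hf.continuousOn_normalizedCDF⟩

theorem invOn_quantile (hf : IsPosDensityOn f a b) :
    InvOn (quantile f a b) (normalizedCDF f a) (Ioo a b) (Ioo 0 1) :=
  hf.bijOn_normalizedCDF.invOn_invFunOn

theorem bijOn_quantile (hf : IsPosDensityOn f a b) :
    BijOn (quantile f a b) (Ioo 0 1) (Ioo a b) :=
  hf.bijOn_normalizedCDF.symm hf.invOn_quantile.symm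

theorem strictMonoOn_quantile (hf : IsPosDensityOn f a b) :
    StrictMonoOn (quantile f a b) (Ioo 0 1) := fun x hx y hy hxy => by
  rwa [← hf.strictMonoOn_normalizedCDF.lt_iff_lt
      (Ioo_subset_Icc_self (hf.bijOn_quantile.mapsTo hx))
      (Ioo_subset_Icc_self (hf.bijOn_quantile.mapsTo hy)),
    hf.invOn_quantile.2 hx, hf.invOn_quantile.2 hy]

theorem hasDerivAt_quantile (hf : IsPosDensityOn f a b) {τ : ℝ} (hτ : τ ∈ Ioo (0 : ℝ) 1) :
    HasDerivAt (quantile f a b) ((∫ s, f s) / f (quantile f a b τ)) τ := by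
  have hmem := hf.bijOn_quantile.mapsTo hτ
  have hcont : ContinuousAt (quantile f a b) τ :=
    hf.strictMonoOn_quantile.continuousAt_of_image_mem_nhds (isOpen_Ioo.mem_nhds hτ)
      (Filter.mem_of_superset (isOpen_Ioo.mem_nhds hmem) hf.bijOn_quantile.surjOn)
  have hderiv := HasDerivAt.of_local_left_inverse hcont (hf.hasDerivAt_normalizedCDF hmem)
    (mul_pos (inv_pos.2 hf.integral_pos) (hf.pos _ hmem)).ne'
    (Filter.eventually_of_mem (isOpen_Ioo.mem_nhds hτ) hf.invOn_quantile.2)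
  rwa [mul_inv, inv_inv, ← div_eq_mul_inv] at hderiv

theorem continuousOn_quantile (hf : IsPosDensityOn f a b) :
    ContinuousOn (quantile f a b) (Ioo 0 1) :=
  fun _ hτ => (hf.hasDerivAt_quantile hτ).continuousAt.continuousWithinAt

theorem comp_quantile_pos (hf : IsPosDensityOn f a b) {τ : ℝ} (hτ : τ ∈ Ioo (0 : ℝ) 1) :
    0 < f (quantile f a b τ) :=
  hf.pos _ (hf.bijOn_quantile.mapsTo hτ)

theorem continuousOn_comp_quantile (hf : IsPosDensityOn f a b) :
    ContinuousOn (fun τ => f (quantile f a b τ)) (Ioo 0 1) :=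
  hf.continuousOn.comp hf.continuousOn_quantile hf.bijOn_quantile.mapsTo

theorem rpow_integral_mul_rpow_integral_le_transportWeight (hf : IsPosDensityOn f a b)
    (hg : IsPosDensityOn g c d) (hθ : θ ∈ Icc (0 : ℝ) 1) {τ : ℝ} (hτ : τ ∈ Ioo (0 : ℝ) 1) :
    (∫ s, f s) ^ (1 - θ) * (∫ s, g s) ^ θ ≤ transportWeight θ (∫ s, f s) (∫ s, g s)
      (f (quantile f a b τ)) (g (quantile g c d τ)) :=
  rpow_mul_rpow_le_transportWeight hθ hf.integral_pos.le hg.integral_pos.le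
    (hf.comp_quantile_pos hτ) (hg.comp_quantile_pos hτ)

theorem continuousOn_transportWeight_quantile (hf : IsPosDensityOn f a b)
    (hg : IsPosDensityOn g c d) (θ : ℝ) :
    ContinuousOn (fun τ => transportWeight θ (∫ s, f s) (∫ s, g s)
      (f (quantile f a b τ)) (g (quantile g c d τ))) (Ioo 0 1) := by
  have hf0 : ∀ τ ∈ Ioo (0 : ℝ) 1, f (quantile f a b τ) ≠ 0 :=
    fun τ hτ => (hf.comp_quantile_pos hτ).ne'
  have hg0 : ∀ τ ∈ Ioo (0 : ℝ) 1, g (quantile g c d τ) ≠ 0 :=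
    fun τ hτ => (hg.comp_quantile_pos hτ).ne'
  exact ((continuousOn_const.mul (continuousOn_const.div hf.continuousOn_comp_quantile hf0)).add
    (continuousOn_const.mul (continuousOn_const.div hg.continuousOn_comp_quantile hg0))).mul
    ((hf.continuousOn_comp_quantile.rpow_const fun τ hτ => .inl (hf0 τ hτ)).mul
      (hg.continuousOn_comp_quantile.rpow_const fun τ hτ => .inl (hg0 τ hτ)))

-- Substitute `x = (1 - θ) z₁ τ + θ z₂ τ` in `∫ h`, where `z₁`, `z₂` are the quantile functions.
theorem integrableOn_and_setIntegral_transportWeight_le (hf : IsPosDensityOn f a b)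
    (hg : IsPosDensityOn g c d) (hθ : θ ∈ Ioo (0 : ℝ) 1) (hh : 0 ≤ h) (hint : Integrable h)
    (hfgh : ∀ s ∈ Ioo a b, ∀ t ∈ Ioo c d, f s ^ (1 - θ) * g t ^ θ ≤ h ((1 - θ) * s + θ * t)) :
    IntegrableOn (fun τ => transportWeight θ (∫ s, f s) (∫ s, g s)
        (f (quantile f a b τ)) (g (quantile g c d τ))) (Ioo 0 1) ∧
      ∫ τ in Ioo (0 : ℝ) 1, transportWeight θ (∫ s, f s) (∫ s, g s)
        (f (quantile f a b τ)) (g (quantile g c d τ)) ≤ ∫ s, h s := by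
  have hθ₁ : 0 < 1 - θ := sub_pos.2 hθ.2
  have hθ₀ : 0 < θ := hθ.1
  set w : ℝ → ℝ := fun τ => transportWeight θ (∫ s, f s) (∫ s, g s)
    (f (quantile f a b τ)) (g (quantile g c d τ))
  let z : ℝ → ℝ := fun τ => (1 - θ) * quantile f a b τ + θ * quantile g c d τ
  let z' : ℝ → ℝ := fun τ => (1 - θ) * ((∫ s, f s) / f (quantile f a b τ)) +
    θ * ((∫ s, g s) / g (quantile g c d τ))
  have hz' : ∀ τ ∈ Ioo (0 : ℝ) 1, HasDerivWithinAt z (z' τ) (Ioo 0 1) τ := fun τ hτ =>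
    (((hf.hasDerivAt_quantile hτ).const_mul _).add
      ((hg.hasDerivAt_quantile hτ).const_mul _)).hasDerivWithinAt
  have hz : MonotoneOn z (Ioo 0 1) :=
    fun _ hx _ hy hxy => add_le_add
      (mul_le_mul_of_nonneg_left (hf.strictMonoOn_quantile.monotoneOn hx hy hxy) hθ₁.le)
      (mul_le_mul_of_nonneg_left (hg.strictMonoOn_quantile.monotoneOn hx hy hxy) hθ₀.le)
  have w_nonneg : ∀ τ ∈ Ioo (0 : ℝ) 1, 0 ≤ w τ := fun τ hτ =>
    (mul_nonneg (Real.rpow_nonneg hf.integral_pos.le _)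
      (Real.rpow_nonneg hg.integral_pos.le _)).trans
      (hf.rpow_integral_mul_rpow_integral_le_transportWeight hg (Ioo_subset_Icc_self hθ) hτ)
  have w_le : ∀ τ ∈ Ioo (0 : ℝ) 1, w τ ≤ z' τ * h (z τ) := fun τ hτ => by
    have := hf.integral_pos
    have := hg.integral_pos
    have := hf.comp_quantile_pos hτ
    have := hg.comp_quantile_pos hτ
    exact mul_le_mul_of_nonneg_left
      (hfgh _ (hf.bijOn_quantile.mapsTo hτ) _ (hg.bijOn_quantile.mapsTo hτ)) (by positivity)
  have hzint := integrableOn_deriv_mul_comp measurableSet_Ioo hz hz' hint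
  have w_int : IntegrableOn w (Ioo 0 1) := by
    refine hzint.mono' ((hf.continuousOn_transportWeight_quantile hg θ).aestronglyMeasurable
      measurableSet_Ioo) ?_
    filter_upwards [ae_restrict_mem measurableSet_Ioo] with τ hτ
    rw [Real.norm_of_nonneg (w_nonneg τ hτ)]
    exact w_le τ hτ
  exact ⟨w_int, (setIntegral_mono_on w_int hzint measurableSet_Ioo w_le).trans
    (setIntegral_deriv_mul_comp_le_integral measurableSet_Ioo hz hz' hh hint)⟩

theorem prekopa_leindler (hf : IsPosDensityOn f a b) (hg : IsPosDensityOn g c d)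
    (hθ : θ ∈ Ioo (0 : ℝ) 1) (hh : 0 ≤ h) (hint : Integrable h)
    (hfgh : ∀ s ∈ Ioo a b, ∀ t ∈ Ioo c d, f s ^ (1 - θ) * g t ^ θ ≤ h ((1 - θ) * s + θ * t)) :
    (∫ s, f s) ^ (1 - θ) * (∫ s, g s) ^ θ ≤ ∫ s, h s := by
  obtain ⟨w_int, w_le⟩ :=
    hf.integrableOn_and_setIntegral_transportWeight_le hg hθ hh hint hfgh
  refine le_trans ?_ w_le
  simpa using setIntegral_mono_on (integrableOn_const (by simp)) w_int measurableSet_Ioo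
    fun τ hτ => hf.rpow_integral_mul_rpow_integral_le_transportWeight hg (Ioo_subset_Icc_self hθ) hτ

theorem comp_quantile_eq_of_integral_le (hf : IsPosDensityOn f a b)
    (hg : IsPosDensityOn g c d) (hθ : θ ∈ Ioo (0 : ℝ) 1) (hh : 0 ≤ h) (hint : Integrable h)
    (hfgh : ∀ s ∈ Ioo a b, ∀ t ∈ Ioo c d, f s ^ (1 - θ) * g t ^ θ ≤ h ((1 - θ) * s + θ * t))
    (hfg : ∫ s, g s = ∫ s, f s) (hle : ∫ s, h s ≤ ∫ s, f s) {τ : ℝ} (hτ : τ ∈ Ioo (0 : ℝ) 1) :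
    g (quantile g c d τ) = f (quantile f a b τ) := by
  obtain ⟨w_int, w_le⟩ :=
    hf.integrableOn_and_setIntegral_transportWeight_le hg hθ hh hint hfgh
  have hmean : (∫ s, f s) ^ (1 - θ) * (∫ s, g s) ^ θ = ∫ s, f s := by
    rw [hfg, ← Real.rpow_add hf.integral_pos, sub_add_cancel, Real.rpow_one]
  have heq := eqOn_of_le_of_setIntegral_le isOpen_Ioo continuousOn_const
    (hf.continuousOn_transportWeight_quantile hg θ) (integrableOn_const (by simp)) w_int
    (fun τ hτ => hf.rpow_integral_mul_rpow_integral_le_transportWeight hg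
      (Ioo_subset_Icc_self hθ) hτ)
    (by simpa [hmean] using w_le.trans hle)
  have hdiv := div_eq_div_of_transportWeight_eq hθ hf.integral_pos.le hg.integral_pos.le
    (hf.comp_quantile_pos hτ) (hg.comp_quantile_pos hτ) (heq hτ)
  rw [hfg, div_eq_mul_inv, div_eq_mul_inv, mul_right_inj' hf.integral_pos.ne', inv_inj] at hdiv
  exact hdiv.symm

theorem exists_eqOn_quantile_add_const (hf : IsPosDensityOn f a b) (hg : IsPosDensityOn g c d)
    (hfg : ∫ s, g s = ∫ s, f s)
    (hq : ∀ τ ∈ Ioo (0 : ℝ) 1, g (quantile g c d τ) = f (quantile f a b τ)) :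
    ∃ k, EqOn (quantile g c d) (fun τ => k + quantile f a b τ) (Ioo 0 1) := by
  have hderiv : ∀ τ ∈ Ioo (0 : ℝ) 1,
      HasDerivAt (fun τ => quantile g c d τ - quantile f a b τ) 0 τ := fun τ hτ => by
    simpa only [hq τ hτ, hfg, sub_self] using
      (hg.hasDerivAt_quantile hτ).fun_sub (hf.hasDerivAt_quantile hτ)
  obtain ⟨k, hk⟩ := isOpen_Ioo.exists_is_const_of_deriv_eq_zero isPreconnected_Ioo
    (fun τ hτ => (hderiv τ hτ).differentiableAt.differentiableWithinAt)
    (fun τ hτ => (hderiv τ hτ).deriv)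
  exact ⟨k, fun τ hτ => sub_eq_iff_eq_add.1 (hk τ hτ)⟩

theorem exists_translate_of_integral_le (hf : IsPosDensityOn f a b)
    (hg : IsPosDensityOn g c d) (hθ : θ ∈ Ioo (0 : ℝ) 1) (hh : 0 ≤ h) (hint : Integrable h)
    (hfgh : ∀ s ∈ Ioo a b, ∀ t ∈ Ioo c d, f s ^ (1 - θ) * g t ^ θ ≤ h ((1 - θ) * s + θ * t))
    (hfg : ∫ s, g s = ∫ s, f s) (hle : ∫ s, h s ≤ ∫ s, f s) :
    ∃ k, c = k + a ∧ d = k + b ∧ ∀ s ∈ Ioo a b, g (k + s) = f s := by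
  have hq := fun τ (hτ : τ ∈ Ioo (0 : ℝ) 1) =>
    hf.comp_quantile_eq_of_integral_le hg hθ hh hint hfgh hfg hle hτ
  obtain ⟨k, hk⟩ := hf.exists_eqOn_quantile_add_const hg hfg hq
  have hIoo : Ioo c d = Ioo (k + a) (k + b) := calc
    Ioo c d = quantile g c d '' Ioo 0 1 := hg.bijOn_quantile.image_eq.symm
    _ = (fun s => k + s) '' (quantile f a b '' Ioo 0 1) := by rw [hk.image_eq, image_image]
    _ = Ioo (k + a) (k + b) := by rw [hf.bijOn_quantile.image_eq, image_const_add_Ioo]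
  have hlt : k + a < k + b := add_lt_add_right hf.lt k
  refine ⟨k, ?_, ?_, fun s hs => ?_⟩
  · rw [← csInf_Ioo hg.lt, hIoo, csInf_Ioo hlt]
  · rw [← csSup_Ioo hg.lt, hIoo, csSup_Ioo hlt]
  obtain ⟨τ, hτ, rfl⟩ := hf.bijOn_quantile.surjOn hs
  simpa only [hk hτ] using hq τ hτ

end IsPosDensityOn

section ConvexGeometry

/-- Convex bodies in the sense of convex geometry: compact convex sets with nonempty interior.
Mathlib's bundled `ConvexBody` only asks for nonemptiness. -/
structure IsConvexBody {E : Type*} [TopologicalSpace E] [AddCommGroup E] [Module ℝ E]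
    (A : Set E) : Prop where
  isCompact : IsCompact A
  convex : Convex ℝ A
  nonempty_interior : (interior A).Nonempty

/-- The multiplicative, dimension-free form of the Brunn–Minkowski inequality for the measure `μ`
on convex bodies. It is a predicate because it is proved by induction on the dimension. -/
def SatisfiesBrunnMinkowski {E : Type*} [TopologicalSpace E] [AddCommGroup E] [Module ℝ E]
    [MeasurableSpace E] (μ : Measure E) : Prop :=
  ∀ ⦃P Q : Set E⦄, IsConvexBody P → IsConvexBody Q → ∀ θ ∈ Ioo (0 : ℝ) 1,
    μ.real P ^ (1 - θ) * μ.real Q ^ θ ≤ μ.real ((1 - θ) • P + θ • Q)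

variable {E G : Type*} [NormedAddCommGroup E] [NormedSpace ℝ E]
  [NormedAddCommGroup G] [NormedSpace ℝ G] {A B : Set E}

theorem image_interior_eq_interior_image (hA : Convex ℝ A) (hint : (interior A).Nonempty)
    (u : E →L[ℝ] G) (hu : IsOpenMap u) : u '' interior A = interior (u '' A) := by
  refine (hu.image_interior_subset A).antisymm ?_
  have hopen : IsOpen (u '' interior A) := hu _ isOpen_interior
  have hconv : Convex ℝ (u '' interior A) := hA.interior.linear_image u.toLinearMap
  have hne : (interior (u '' interior A)).Nonempty := hopen.interior_eq.symm ▸ hint.image u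
  calc interior (u '' A) ⊆ interior (u '' closure (interior A)) := by
        rw [hA.closure_interior_eq_closure_of_nonempty_interior hint]
        exact interior_mono (image_mono subset_closure)
    _ ⊆ interior (closure (u '' interior A)) :=
        interior_mono (image_closure_subset_closure_image u.continuous)
    _ = u '' interior A := by
        rw [hconv.interior_closure_eq_interior_of_nonempty_interior hne, hopen.interior_eq]

theorem subset_of_forall_image_subset_image (hB : Convex ℝ B) (hBcl : IsClosed B)
    (h : ∀ u : E →L[ℝ] ℝ, u '' A ⊆ u '' B) : A ⊆ B := by
  intro x hx
  by_contra hxB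
  obtain ⟨u, r, hur, hrx⟩ := geometric_hahn_banach_closed_point hB hBcl hxB
  obtain ⟨y, hy, hyx⟩ := h u (mem_image_of_mem u hx)
  exact ((hur y hy).trans hrx).ne hyx

namespace IsConvexBody

protected theorem nonempty (hA : IsConvexBody A) : A.Nonempty :=
  hA.nonempty_interior.mono interior_subset

theorem image (hA : IsConvexBody A) (L : E ≃L[ℝ] G) : IsConvexBody (L '' A) where
  isCompact := hA.isCompact.image L.continuous
  convex := hA.convex.linear_image L.toLinearEquiv.toLinearMap
  nonempty_interior := (hA.nonempty_interior.image L).mono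
    (L.toHomeomorph.isOpenMap.image_interior_subset A)

theorem isCompact_smul_add_smul (hA : IsConvexBody A) (hB : IsConvexBody B) (r s : ℝ) :
    IsCompact (r • A + s • B) :=
  (hA.isCompact.smul r).add (hB.isCompact.smul s)

variable [MeasurableSpace E]

theorem measureReal_pos (hA : IsConvexBody A) (μ : Measure E) [μ.IsOpenPosMeasure]
    [IsFiniteMeasureOnCompacts μ] : 0 < μ.real A :=
  ENNReal.toReal_pos (Measure.measure_pos_of_nonempty_interior μ hA.nonempty_interior).ne'
    hA.isCompact.measure_ne_top

variable [BorelSpace E]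

theorem of_measureReal_ne_zero [FiniteDimensional ℝ E] (μ : Measure E) [μ.IsAddHaarMeasure]
    (hA : IsCompact A) (hconv : Convex ℝ A) (h : μ.real A ≠ 0) : IsConvexBody A := by
  refine ⟨hA, hconv, nonempty_iff_ne_empty.2 fun hempty => h ?_⟩
  have hfrontier := hconv.addHaar_frontier μ
  rw [hA.isClosed.frontier_eq, hempty, sdiff_empty] at hfrontier
  rw [measureReal_def, hfrontier, ENNReal.toReal_zero]

theorem eq_of_subset_of_measureReal_le (hB : IsConvexBody B) {μ : Measure E}
    [μ.IsOpenPosMeasure] [IsFiniteMeasureOnCompacts μ] (hA : IsClosed A) (hAB : A ⊆ B)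
    (hle : μ.real B ≤ μ.real A) : A = B := by
  have hBfin : μ B ≠ ⊤ := hB.isCompact.measure_ne_top
  have hAfin : μ A ≠ ⊤ := measure_ne_top_of_subset hAB hBfin
  have hnull : μ (B \ A) = 0 := by
    rw [measure_sdiff hAB hA.measurableSet.nullMeasurableSet hAfin]
    exact tsub_eq_zero_of_le ((ENNReal.toReal_le_toReal hBfin hAfin).1 hle)
  have hdiff : interior B \ A = ∅ := (isOpen_interior.sdiff hA).measure_eq_zero_iff μ |>.1
    (measure_mono_null (sdiff_subset_sdiff_left interior_subset) hnull)
  refine hAB.antisymm (subset_closure.trans ?_)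
  rw [← hB.convex.closure_interior_eq_closure_of_nonempty_interior hB.nonempty_interior]
  exact closure_minimal (sdiff_eq_empty.1 hdiff) hA

end IsConvexBody

end ConvexGeometry

section SliceVolume

/-- The volume of the slice of `A` over the point `s` of the first factor. -/
def sliceVolume {α F : Type*} [MeasurableSpace F] (ν : Measure F) (A : Set (α × F)) (s : α) : ℝ :=
  ν.real (Prod.mk s ⁻¹' A)

theorem sliceVolume_eq_zero {α F : Type*} [MeasurableSpace F] {ν : Measure F} {A : Set (α × F)}
    {s : α} (hs : s ∉ Prod.fst '' A) : sliceVolume ν A s = 0 := by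
  have hempty : Prod.mk s ⁻¹' A = ∅ :=
    eq_empty_of_forall_notMem fun y hy => hs (mem_image_of_mem Prod.fst hy)
  rw [sliceVolume, hempty, measureReal_empty]

theorem isCompact_slice {α F : Type*} [TopologicalSpace α] [T2Space α] [TopologicalSpace F]
    [T2Space F] {A : Set (α × F)} (hA : IsCompact A) (s : α) : IsCompact (Prod.mk s ⁻¹' A) :=
  (hA.image continuous_snd).of_isClosed_subset (hA.isClosed.preimage (.prodMk_right s))
    fun y hy => ⟨(s, y), hy, rfl⟩

section Fubini

variable {α F : Type*} [MeasurableSpace α] [MeasurableSpace F] {μ : Measure α} {ν : Measure F}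
  {A : Set (α × F)} {φ : α → ℝ}

theorem integral_indicator_comp_fst (hA : MeasurableSet A) (s : α) :
    ∫ y, A.indicator (fun p => φ p.1) (s, y) ∂ν = φ s * sliceVolume ν A s := by
  have hslice : (fun y => A.indicator (fun p => φ p.1) (s, y)) =
      (Prod.mk s ⁻¹' A).indicator fun _ => φ s := rfl
  rw [hslice, integral_indicator_const _ (measurable_prodMk_left hA), smul_eq_mul, mul_comm,
    sliceVolume]

variable [SFinite ν]

theorem setIntegral_comp_fst [SFinite μ] (hA : MeasurableSet A)
    (hφ : IntegrableOn (fun p => φ p.1) A (μ.prod ν)) :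
    ∫ p in A, φ p.1 ∂(μ.prod ν) = ∫ s, φ s * sliceVolume ν A s ∂μ := by
  rw [← integral_indicator hA, integral_prod _ ((integrable_indicator_iff hA).2 hφ)]
  simp only [integral_indicator_comp_fst hA]

theorem integrable_sliceVolume (hA : MeasurableSet A) (hfin : μ.prod ν A ≠ ⊤) :
    Integrable (sliceVolume ν A) μ :=
  Measure.integrable_measure_prodMk_left hA hfin

theorem integral_sliceVolume [SFinite μ] (hA : MeasurableSet A) (hfin : μ.prod ν A ≠ ⊤) :
    ∫ s, sliceVolume ν A s ∂μ = (μ.prod ν).real A := by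
  simpa using (setIntegral_comp_fst (φ := fun _ => 1) hA (integrableOn_const hfin)).symm

end Fubini

variable {F : Type*} [NormedAddCommGroup F] [NormedSpace ℝ F] {A B : Set (ℝ × F)} {s t θ : ℝ}

theorem smul_slice_add_smul_slice_subset (r r' s t : ℝ) (A B : Set (ℝ × F)) :
    r • (Prod.mk s ⁻¹' A) + r' • (Prod.mk t ⁻¹' B) ⊆
      Prod.mk (r * s + r' * t) ⁻¹' (r • A + r' • B) := by
  rintro _ ⟨_, ⟨x, hx, rfl⟩, _, ⟨y, hy, rfl⟩, rfl⟩
  exact ⟨_, ⟨_, hx, rfl⟩, _, ⟨_, hy, rfl⟩, rfl⟩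

namespace IsConvexBody

theorem slice (hA : IsConvexBody A) (hs : s ∈ interior (Prod.fst '' A)) :
    IsConvexBody (Prod.mk s ⁻¹' A) where
  isCompact := isCompact_slice hA.isCompact s
  convex := fun x hx y hy p q hp hq hpq => by
    simpa [← add_mul, hpq] using hA.convex hx hy hp hq hpq
  nonempty_interior := by
    obtain ⟨⟨_, y⟩, hy, rfl⟩ := (image_interior_eq_interior_image hA.convex hA.nonempty_interior
      (ContinuousLinearMap.fst ℝ ℝ F) isOpenMap_fst).symm ▸ hs
    exact ⟨y, preimage_interior_subset_interior_preimage (Continuous.prodMk_right _) hy⟩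

theorem exists_image_fst_eq_Icc (hA : IsConvexBody A) :
    ∃ a b, a < b ∧ Prod.fst '' A = Icc a b := by
  have hconn : IsConnected (Prod.fst '' A) :=
    (hA.convex.isConnected hA.nonempty).image _ continuous_fst.continuousOn
  have hshadow := eq_Icc_of_connected_compact hconn (hA.isCompact.image continuous_fst)
  refine ⟨_, _, ?_, hshadow⟩
  rw [← nonempty_Ioo, ← interior_Icc, ← hshadow]
  exact (hA.nonempty_interior.image _).mono (isOpenMap_fst.image_interior_subset A)

variable [MeasurableSpace F] {ν : Measure F} [IsFiniteMeasureOnCompacts ν]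

theorem rpow_sliceVolume_mul_rpow_sliceVolume_le (hν : SatisfiesBrunnMinkowski ν)
    (hA : IsConvexBody A) (hB : IsConvexBody B)
    (hs : s ∈ interior (Prod.fst '' A)) (ht : t ∈ interior (Prod.fst '' B))
    (hθ : θ ∈ Ioo (0 : ℝ) 1) :
    sliceVolume ν A s ^ (1 - θ) * sliceVolume ν B t ^ θ ≤
      sliceVolume ν ((1 - θ) • A + θ • B) ((1 - θ) * s + θ * t) :=
  (hν (hA.slice hs) (hB.slice ht) θ hθ).trans
    (measureReal_mono (smul_slice_add_smul_slice_subset _ _ _ _ _ _)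
      (isCompact_slice (hA.isCompact_smul_add_smul hB _ _) _).measure_ne_top)

variable [ν.IsOpenPosMeasure]

theorem concaveOn_log_sliceVolume (hν : SatisfiesBrunnMinkowski ν) (hA : IsConvexBody A) :
    ConcaveOn ℝ (interior (Prod.fst '' A)) fun s => Real.log (sliceVolume ν A s) := by
  have hconv : Convex ℝ (interior (Prod.fst '' A)) :=
    (hA.convex.linear_image (LinearMap.fst ℝ ℝ F)).interior
  refine concaveOn_iff_forall_pos.2 ⟨hconv, fun s hs t ht p q hp hq hpq => ?_⟩
  obtain rfl : p = 1 - q := eq_sub_of_add_eq hpq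
  have hs0 : 0 < sliceVolume ν A s := (hA.slice hs).measureReal_pos ν
  have ht0 : 0 < sliceVolume ν A t := (hA.slice ht).measureReal_pos ν
  have hle := rpow_sliceVolume_mul_rpow_sliceVolume_le hν hA hA hs ht ⟨hq, sub_pos.1 hp⟩
  rw [← hA.convex.add_smul hp.le hq.le, hpq, one_smul] at hle
  have hlog := Real.log_le_log (by positivity) hle
  rwa [Real.log_mul (by positivity) (by positivity), Real.log_rpow hs0, Real.log_rpow ht0] at hlog

variable [BorelSpace F] [FiniteDimensional ℝ F]

theorem exists_isPosDensityOn_sliceVolume (hν : SatisfiesBrunnMinkowski ν)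
    (hA : IsConvexBody A) :
    ∃ a b, Prod.fst '' A = Icc a b ∧ IsPosDensityOn (sliceVolume ν A) a b := by
  obtain ⟨a, b, hab, hshadow⟩ := hA.exists_image_fst_eq_Icc
  have hpos : ∀ s ∈ Ioo a b, 0 < sliceVolume ν A s := fun s hs =>
    (hA.slice (by rwa [hshadow, interior_Icc])).measureReal_pos ν
  have hlog := hA.concaveOn_log_sliceVolume hν
  rw [hshadow, interior_Icc] at hlog
  refine ⟨a, b, hshadow, hab, ?_, hpos, fun s hs => sliceVolume_eq_zero (hshadow ▸ hs), ?_⟩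
  · exact (hlog.continuousOn isOpen_Ioo).rexp.congr fun s hs => (Real.exp_log (hpos s hs)).symm
  · exact integrable_sliceVolume hA.isCompact.measurableSet hA.isCompact.measure_ne_top

end IsConvexBody

end SliceVolume

section Moments

namespace IsPosDensityOn

variable {f g : ℝ → ℝ} {a b k : ℝ}

theorem integrable_id_mul (hf : IsPosDensityOn f a b) : Integrable fun s => s * f s := by
  refine (integrableOn_iff_integrable_of_support_subset (s := Icc a b) fun s hs => ?_).1
    (hf.integrable.integrableOn.continuousOn_mul continuousOn_id isCompact_Icc)
  by_contra hmem
  exact hs (by simp [hf.eq_zero s hmem])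

theorem comp_const_add_ae_eq (hf : IsPosDensityOn f a b) (hg : IsPosDensityOn g (k + a) (k + b))
    (hfg : ∀ s ∈ Ioo a b, g (k + s) = f s) : (fun s => g (k + s)) =ᵐ[volume] f := by
  filter_upwards [compl_mem_ae_iff.2 (Real.volume_singleton (a := a)),
    compl_mem_ae_iff.2 (Real.volume_singleton (a := b))] with s (hsa : s ≠ a) (hsb : s ≠ b)
  by_cases hs : s ∈ Icc a b
  · exact hfg s ⟨hs.1.lt_of_ne' hsa, hs.2.lt_of_ne hsb⟩
  · rw [hf.eq_zero s hs, hg.eq_zero]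
    exact fun hmem => hs ⟨le_of_add_le_add_left hmem.1, le_of_add_le_add_left hmem.2⟩

theorem integral_id_mul_eq_add (hf : IsPosDensityOn f a b)
    (hg : IsPosDensityOn g (k + a) (k + b)) (hfg : ∀ s ∈ Ioo a b, g (k + s) = f s) :
    ∫ s, s * g s = k * (∫ s, f s) + ∫ s, s * f s := calc
  ∫ s, s * g s = ∫ s, (k + s) * g (k + s) :=
    (integral_add_left_eq_self (fun s => s * g s) k).symm
  _ = ∫ s, (k * f s + s * f s) := by
    refine integral_congr_ae ?_
    filter_upwards [hf.comp_const_add_ae_eq hg hfg] with s hs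
    rw [hs, add_mul]
  _ = k * (∫ s, f s) + ∫ s, s * f s := by
    rw [integral_add (hf.integrable.const_mul k) hf.integrable_id_mul, integral_const_mul]

end IsPosDensityOn

end Moments

section Product

variable {F : Type*} [NormedAddCommGroup F] [NormedSpace ℝ F] [FiniteDimensional ℝ F]
  [MeasurableSpace F] [BorelSpace F] {ν : Measure F} [IsFiniteMeasureOnCompacts ν]
  {A B : Set (ℝ × F)} {θ : ℝ}

theorem IsConvexBody.integral_id_mul_sliceVolume (hA : IsConvexBody A) :
    ∫ s, s * sliceVolume ν A s = ∫ p in A, p.1 ∂(volume.prod ν) :=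
  (setIntegral_comp_fst (φ := id) hA.isCompact.measurableSet
    (continuousOn_fst.integrableOn_compact hA.isCompact)).symm

variable [ν.IsOpenPosMeasure]

theorem SatisfiesBrunnMinkowski.volume_prod (hν : SatisfiesBrunnMinkowski ν) :
    SatisfiesBrunnMinkowski ((volume : Measure ℝ).prod ν) := by
  intro A B hA hB θ hθ
  obtain ⟨a, b, hshadowA, hf⟩ := hA.exists_isPosDensityOn_sliceVolume hν
  obtain ⟨c, d, hshadowB, hg⟩ := hB.exists_isPosDensityOn_sliceVolume hν
  have hsum := hA.isCompact_smul_add_smul hB (1 - θ) θ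
  rw [← integral_sliceVolume hA.isCompact.measurableSet hA.isCompact.measure_ne_top,
    ← integral_sliceVolume hB.isCompact.measurableSet hB.isCompact.measure_ne_top,
    ← integral_sliceVolume hsum.measurableSet hsum.measure_ne_top]
  exact hf.prekopa_leindler hg hθ (fun _ => measureReal_nonneg)
    (integrable_sliceVolume hsum.measurableSet hsum.measure_ne_top) fun s hs t ht =>
      IsConvexBody.rpow_sliceVolume_mul_rpow_sliceVolume_le hν hA hB
        (by rwa [hshadowA, interior_Icc]) (by rwa [hshadowB, interior_Icc]) hθ

theorem IsConvexBody.image_fst_eq_vadd_of_measureReal_le (hν : SatisfiesBrunnMinkowski ν)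
    (hA : IsConvexBody A) (hB : IsConvexBody B) (hθ : θ ∈ Ioo (0 : ℝ) 1)
    (hAB : (volume.prod ν).real B = (volume.prod ν).real A)
    (hle : (volume.prod ν).real ((1 - θ) • A + θ • B) ≤ (volume.prod ν).real A) :
    Prod.fst '' B =
      (⨍ p in B, p.1 ∂(volume.prod ν) - ⨍ p in A, p.1 ∂(volume.prod ν)) +ᵥ Prod.fst '' A := by
  obtain ⟨a, b, hshadowA, hf⟩ := hA.exists_isPosDensityOn_sliceVolume hν
  obtain ⟨c, d, hshadowB, hg⟩ := hB.exists_isPosDensityOn_sliceVolume hν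
  have hsum := hA.isCompact_smul_add_smul hB (1 - θ) θ
  have hvolA : ∫ s, sliceVolume ν A s = (volume.prod ν).real A :=
    integral_sliceVolume hA.isCompact.measurableSet hA.isCompact.measure_ne_top
  have hvolB : ∫ s, sliceVolume ν B s = (volume.prod ν).real B :=
    integral_sliceVolume hB.isCompact.measurableSet hB.isCompact.measure_ne_top
  obtain ⟨k, rfl, rfl, htranslate⟩ := hf.exists_translate_of_integral_le
    (h := sliceVolume ν ((1 - θ) • A + θ • B)) hg hθ (fun _ => measureReal_nonneg)
    (integrable_sliceVolume hsum.measurableSet hsum.measure_ne_top)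
    (fun s hs t ht => IsConvexBody.rpow_sliceVolume_mul_rpow_sliceVolume_le hν hA hB
      (by rwa [hshadowA, interior_Icc]) (by rwa [hshadowB, interior_Icc]) hθ)
    (by rw [hvolA, hvolB, hAB])
    (by rwa [hvolA, integral_sliceVolume hsum.measurableSet hsum.measure_ne_top])
  have hmoment := hf.integral_id_mul_eq_add hg htranslate
  rw [hA.integral_id_mul_sliceVolume, hB.integral_id_mul_sliceVolume, hvolA] at hmoment
  have hk : ⨍ p in B, p.1 ∂(volume.prod ν) - ⨍ p in A, p.1 ∂(volume.prod ν) = k := by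
    have hpos := hvolA ▸ hf.integral_pos
    rw [setAverage_eq, setAverage_eq, hAB, hmoment, ← smul_sub, add_sub_cancel_right, smul_eq_mul,
      mul_comm k, inv_mul_cancel_left₀ hpos.ne']
  rw [hk, hshadowA, hshadowB, ← image_vadd]
  exact (image_const_add_Icc k a b).symm

end Product

section Transfer

theorem measureReal_image_of_measurePreserving {α β : Type*} [MeasurableSpace α]
    [MeasurableSpace β] {μ : Measure α} {η : Measure β} {f : α → β} (hf : MeasurePreserving f μ η)
    (hemb : MeasurableEmbedding f) (s : Set α) : η.real (f '' s) = μ.real s := by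
  rw [measureReal_def, ← hf.measure_preimage_emb hemb, preimage_image_eq _ hemb.injective,
    measureReal_def]

variable {E G : Type*} [NormedAddCommGroup E] [NormedSpace ℝ E] [MeasurableSpace E] [BorelSpace E]
  [NormedAddCommGroup G] [NormedSpace ℝ G] [MeasurableSpace G] [BorelSpace G]
  {μ : Measure E} {η : Measure G}

theorem measureReal_smul_image_add_smul_image {L : E ≃L[ℝ] G} (hL : MeasurePreserving L μ η)
    (r s : ℝ) (A B : Set E) :
    η.real (r • (L '' A) + s • (L '' B)) = μ.real (r • A + s • B) := by
  rw [← image_smul_set, ← image_smul_set, ← image_add,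
    measureReal_image_of_measurePreserving hL L.toHomeomorph.measurableEmbedding]

theorem SatisfiesBrunnMinkowski.of_measurePreserving (h : SatisfiesBrunnMinkowski η)
    {L : E ≃L[ℝ] G} (hL : MeasurePreserving L μ η) : SatisfiesBrunnMinkowski μ := by
  intro A B hA hB θ hθ
  have hemb : MeasurableEmbedding L := L.toHomeomorph.measurableEmbedding
  simpa only [measureReal_smul_image_add_smul_image hL,
    measureReal_image_of_measurePreserving hL hemb] using h (hA.image L) (hB.image L) θ hθ

end Transfer

section Haar

variable {E : Type*} [NormedAddCommGroup E] [NormedSpace ℝ E] [FiniteDimensional ℝ E]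
  [MeasurableSpace E] [BorelSpace E]

theorem exists_measurePreserving_prod_ker (μ : Measure E) [μ.IsAddHaarMeasure] {u : E →L[ℝ] ℝ}
    (hu : u ≠ 0) :
    ∃ (ν : Measure u.ker) (_ : ν.IsAddHaarMeasure) (L : E ≃L[ℝ] ℝ × u.ker),
      (∀ x, (L x).1 = u x) ∧ MeasurePreserving L μ (volume.prod ν) := by
  obtain ⟨e, he⟩ : ∃ e, u e = 1 := by
    obtain ⟨x, hx⟩ := DFunLike.ne_iff.1 hu
    exact ⟨(u x)⁻¹ • x, by simpa using inv_mul_cancel₀ hx⟩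
  let L := ContinuousLinearEquiv.equivOfRightInverse u
    (ContinuousLinearMap.toSpanSingleton ℝ e) (fun t => by simp [he])
  have : (μ.map L).IsAddHaarMeasure := L.isAddHaarMeasure_map μ
  let ν₀ : Measure u.ker := Measure.addHaar
  let c := (μ.map L).addHaarScalarFactor (volume.prod ν₀)
  have hc : c ≠ 0 := (Measure.addHaarScalarFactor_pos_of_isAddHaarMeasure _ _).ne'
  refine ⟨c • ν₀, Measure.IsAddHaarMeasure.nnreal_smul _ hc, L, fun _ => rfl,
    L.continuous.measurable, ?_⟩
  rw [Measure.prod_smul_right]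
  exact Measure.isAddLeftInvariant_eq_smul _ _

theorem SatisfiesBrunnMinkowski.of_subsingleton {E : Type*} [NormedAddCommGroup E]
    [NormedSpace ℝ E] [Subsingleton E] [MeasurableSpace E] (μ : Measure E)
    [μ.IsOpenPosMeasure] [IsFiniteMeasureOnCompacts μ] : SatisfiesBrunnMinkowski μ := by
  intro A B hA hB θ _
  have hsum : ((1 - θ) • A + θ • B).Nonempty := hA.nonempty.smul_set.add hB.nonempty.smul_set
  have hpos := hA.measureReal_pos μ
  rw [hA.nonempty.eq_univ] at hpos
  rw [hA.nonempty.eq_univ, hB.nonempty.eq_univ] at *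
  rw [hsum.eq_univ, ← Real.rpow_add hpos, sub_add_cancel, Real.rpow_one]

theorem satisfiesBrunnMinkowski_of_isAddHaarMeasure (μ : Measure E) [μ.IsAddHaarMeasure] :
    SatisfiesBrunnMinkowski μ := by
  induction hd : Module.finrank ℝ E using Nat.strong_induction_on generalizing E with
  | _ d ih =>
    rcases subsingleton_or_nontrivial E with _ | _
    · exact .of_subsingleton μ
    obtain ⟨x, hx⟩ := exists_ne (0 : E)
    obtain ⟨u, hu⟩ := SeparatingDual.exists_eq_one (R := ℝ) hx
    have hu0 : u ≠ 0 := by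
      rintro rfl
      exact zero_ne_one hu
    obtain ⟨ν, _, L, -, hL⟩ := exists_measurePreserving_prod_ker μ hu0
    have hlt : Module.finrank ℝ u.ker < Module.finrank ℝ E := Submodule.finrank_lt fun h =>
      hu0 (ContinuousLinearMap.coe_injective (LinearMap.ker_eq_top.1 h))
    exact (ih _ (hd ▸ hlt) ν rfl).volume_prod.of_measurePreserving hL

end Haar

section Equality

variable {E : Type*} [NormedAddCommGroup E] [NormedSpace ℝ E] [FiniteDimensional ℝ E]
  [MeasurableSpace E] [BorelSpace E] {μ : Measure E} [μ.IsAddHaarMeasure]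

namespace IsConvexBody

variable {A B : Set E} {θ : ℝ}

theorem image_eq_vadd_image_of_measureReal_le (hA : IsConvexBody A) (hB : IsConvexBody B)
    (hθ : θ ∈ Ioo (0 : ℝ) 1) (hAB : μ.real B = μ.real A)
    (hle : μ.real ((1 - θ) • A + θ • B) ≤ μ.real A) (u : E →L[ℝ] ℝ) :
    u '' B = (⨍ x in B, u x ∂μ - ⨍ x in A, u x ∂μ) +ᵥ u '' A := by
  rcases eq_or_ne u 0 with rfl | hu
  · simp [hA.nonempty.image_const, hB.nonempty.image_const]
  obtain ⟨ν, _, L, hLu, hL⟩ := exists_measurePreserving_prod_ker μ hu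
  have hemb : MeasurableEmbedding L := L.toHomeomorph.measurableEmbedding
  have hreal := measureReal_image_of_measurePreserving hL hemb
  have himage (S : Set E) : Prod.fst '' (L '' S) = u '' S := by
    simp only [image_image, hLu]
  have haverage (S : Set E) : ⨍ p in L '' S, p.1 ∂(volume.prod ν) = ⨍ x in S, u x ∂μ := by
    simp only [setAverage_eq, hreal, hL.setIntegral_image_emb hemb, hLu]
  have heq := (hA.image L).image_fst_eq_vadd_of_measureReal_le
    (satisfiesBrunnMinkowski_of_isAddHaarMeasure ν) (hB.image L) hθ (by rw [hreal, hreal, hAB])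
    (by rwa [measureReal_smul_image_add_smul_image hL, hreal])
  rwa [himage, himage, haverage, haverage] at heq

theorem map_setAverage (hA : IsConvexBody A) (u : E →L[ℝ] ℝ) :
    u (⨍ x in A, x ∂μ) = ⨍ x in A, u x ∂μ := by
  have hint : IntegrableOn (fun x => x) A μ := continuousOn_id.integrableOn_compact hA.isCompact
  rw [setAverage_eq, setAverage_eq, map_smul, u.integral_comp_comm hint]

theorem eq_vadd_of_measureReal_le (hA : IsConvexBody A) (hB : IsConvexBody B)
    (hθ : θ ∈ Ioo (0 : ℝ) 1) (hAB : μ.real B = μ.real A)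
    (hle : μ.real ((1 - θ) • A + θ • B) ≤ μ.real A) :
    B = (⨍ x in B, x ∂μ - ⨍ x in A, x ∂μ) +ᵥ A := by
  set w := ⨍ x in B, x ∂μ - ⨍ x in A, x ∂μ with hw
  have himage (u : E →L[ℝ] ℝ) : u '' B = u '' (w +ᵥ A) := by
    rw [hA.image_eq_vadd_image_of_measureReal_le hB hθ hAB hle, ← hA.map_setAverage,
      ← hB.map_setAverage, ← map_sub, ← hw]
    exact (image_vadd_distrib u w A).symm
  exact (subset_of_forall_image_subset_image (hA.convex.vadd w) (hA.isCompact.vadd w).isClosed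
    fun u => (himage u).subset).antisymm
    (subset_of_forall_image_subset_image hB.convex hB.isCompact.isClosed
      fun u => (himage u).superset)

end IsConvexBody

theorem exists_eq_smul_vadd_of_concaveOn {A : ℝ → Set E} (hA : ConcaveOn ℝ (Icc 0 1) A)
    (hcomp : ∀ t ∈ Icc (0 : ℝ) 1, IsCompact (A t))
    (hvol : ∀ t ∈ Icc (0 : ℝ) 1, μ.real (A t) = μ.real (A 0)) (hne : μ.real (A 0) ≠ 0) :
    ∃ w : E, ∀ t ∈ Icc (0 : ℝ) 1, A t = t • w +ᵥ A 0 := by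
  have h0 : (0 : ℝ) ∈ Icc (0 : ℝ) 1 := left_mem_Icc.2 zero_le_one
  have h1 : (1 : ℝ) ∈ Icc (0 : ℝ) 1 := right_mem_Icc.2 zero_le_one
  have hconv (t) (ht : t ∈ Icc (0 : ℝ) 1) : Convex ℝ (A t) :=
    convex_iff_pointwise_add_subset.2 fun p q hp hq hpq => by
      simpa only [Convex.combo_self hpq] using hA.2 ht ht hp hq hpq
  have hbody (t) (ht : t ∈ Icc (0 : ℝ) 1) : IsConvexBody (A t) :=
    .of_measureReal_ne_zero μ (hcomp t ht) (hconv t ht) (by rwa [hvol t ht])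
  have hsub (t) (ht : t ∈ Icc (0 : ℝ) 1) : (1 - t) • A 0 + t • A 1 ⊆ A t := by
    simpa using hA.2 h0 h1 (sub_nonneg.2 ht.2) ht.1 (sub_add_cancel 1 t)
  have hhalf : (1 / 2 : ℝ) ∈ Ioo (0 : ℝ) 1 := by norm_num
  have hhalf' := Ioo_subset_Icc_self hhalf
  obtain ⟨w, hw⟩ : ∃ w, A 1 = w +ᵥ A 0 := ⟨_, (hbody 0 h0).eq_vadd_of_measureReal_le (hbody 1 h1)
    hhalf (hvol 1 h1) ((measureReal_mono (hsub _ hhalf') (hcomp _ hhalf').measure_ne_top).trans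
      (hvol _ hhalf').le)⟩
  refine ⟨w, fun t ht => ((hbody t ht).eq_of_subset_of_measureReal_le (μ := μ)
    ((hcomp 0 h0).vadd (t • w)).isClosed ?_ ?_).symm⟩
  · rintro _ ⟨x, hx, rfl⟩
    refine hsub t ht ⟨_, ⟨x, hx, rfl⟩, _, ⟨w + x, hw ▸ ⟨x, hx, rfl⟩, rfl⟩, ?_⟩
    simp only [vadd_eq_add]
    module
  · rw [hvol t ht, measureReal_def, measureReal_def, measure_vadd]

end Equality

theorem concaveOn_inter_smul_vadd {E : Type*} [AddCommGroup E] [Module ℝ E] {K C : Set E}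
    (hK : Convex ℝ K) (hC : Convex ℝ C) (v : E) {I : Set ℝ} (hI : Convex ℝ I) :
    ConcaveOn ℝ I fun t => K ∩ (t • v +ᵥ C) := by
  refine ⟨hI, fun s _ t _ p q hp hq hpq => ?_⟩
  rintro _ ⟨_, ⟨_, ⟨hxK, x, hx, rfl⟩, rfl⟩, _, ⟨_, ⟨hyK, y, hy, rfl⟩, rfl⟩, rfl⟩
  refine ⟨hK hxK hyK hp hq hpq, p • x + q • y, hC hx hy hp hq hpq, ?_⟩
  simp only [vadd_eq_add, smul_eq_mul]
  module

theorem stmt_17_general {E : Type*} [NormedAddCommGroup E] [NormedSpace ℝ E]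
    [FiniteDimensional ℝ E] [MeasurableSpace E] [BorelSpace E] (μ : Measure E)
    [μ.IsAddHaarMeasure] {K C : Set E} (hKcomp : IsCompact K) (hKconv : Convex ℝ K)
    (hCclosed : IsClosed C) (hCconv : Convex ℝ C) (v : E)
    (hvol : ∀ t ∈ Icc (0 : ℝ) 1, μ (K ∩ (t • v +ᵥ C)) = μ (K ∩ C)) (hpos : 0 < μ (K ∩ C)) :
    ∃ w : E, ∀ t ∈ Icc (0 : ℝ) 1, K ∩ (t • v +ᵥ C) = t • w +ᵥ K ∩ C := by
  have hfin : μ (K ∩ C) ≠ ⊤ := (hKcomp.inter_right hCclosed).measure_ne_top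
  obtain ⟨w, hw⟩ := exists_eq_smul_vadd_of_concaveOn (μ := μ)
    (concaveOn_inter_smul_vadd hKconv hCconv v (convex_Icc 0 1))
    (fun t _ => hKcomp.inter_right (hCclosed.vadd (t • v)))
    (fun t ht => by simp only [zero_smul, zero_vadd, measureReal_def, hvol t ht])
    (by simpa only [zero_smul, zero_vadd] using (measureReal_ne_zero_iff hfin).2 hpos.ne')
  exact ⟨w, by simpa only [zero_smul, zero_vadd] using hw⟩

/-- Equality case of Brunn–Minkowski for the concave family `t ↦ K ∩ (tv + C)`: if the
volumes are constant and positive along the segment, all intersections are translates of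
`K ∩ C`, the translation depending affinely (here: linearly) on the parameter. -/
theorem stmt_17 (n : ℕ) (K C : Set (EuclideanSpace ℝ (Fin n)))
    (hKcomp : IsCompact K) (hKconv : Convex ℝ K) (hKint : (interior K).Nonempty)
    (hCcomp : IsCompact C) (hCconv : Convex ℝ C) (hCint : (interior C).Nonempty)
    (v : EuclideanSpace ℝ (Fin n))
    (hvol : ∀ t ∈ Icc (0 : ℝ) 1,
      volume (K ∩ (fun z => t • v + z) '' C) = volume (K ∩ C))
    (hpos : ∀ t ∈ Icc (0 : ℝ) 1,
      0 < volume (K ∩ (fun z => t • v + z) '' C)) :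
    ∃ w : EuclideanSpace ℝ (Fin n), ∀ t ∈ Icc (0 : ℝ) 1,
      K ∩ (fun z => t • v + z) '' C = (fun z => t • w + z) '' (K ∩ C) :=
  have h0 : (0 : ℝ) ∈ Icc (0 : ℝ) 1 := left_mem_Icc.2 zero_le_one
  stmt_17_general volume hKcomp hKconv hCcomp.isClosed hCconv v hvol (hvol 0 h0 ▸ hpos 0 h0)
end
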